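/- arXiv:1812.04987 — 2 statements merged into one kernel-verified Lean document; each statement's English description precedes it below -/
import Mathlib

section
/- Any two locally finite trees, each having infinitely many ends and only finitely many orbits of vertices under its automorphism group, are quasi-isometric. -/
open SimpleGraph

universe u v

/-! ### Quasi-isometries -/

/-- `f` is a `(γ, c)`-quasi-isometry from `G` to `H`. -/
def IsQIWith {V : Type u} {W : Type v} (G : SimpleGraph V) (H : SimpleGraph W)
    (γ c : ℝ) (f : V → W) : Prop :=
  (∀ u v : V, γ⁻¹ * (G.dist u v : ℝ) - c ≤ (H.dist (f u) (f v) : ℝ) ∧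
      (H.dist (f u) (f v) : ℝ) ≤ γ * (G.dist u v : ℝ) + c) ∧
  ∀ w : W, ∃ x : V, (H.dist w (f x) : ℝ) ≤ c

/-- `G` and `H` are quasi-isometric. -/
def QuasiIsometric {V : Type u} {W : Type v} (G : SimpleGraph V) (H : SimpleGraph W) : Prop :=
  ∃ (γ c : ℝ) (f : V → W), 1 ≤ γ ∧ 0 ≤ c ∧ IsQIWith G H γ c f

/-- `H` embeds quasi-isometrically into `G`. -/
def QIEmbeds {V : Type u} {W : Type v} (H : SimpleGraph V) (G : SimpleGraph W) : Prop :=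
  ∃ (γ c : ℝ) (f : V → W), 1 ≤ γ ∧ 0 ≤ c ∧
    ∀ u v : V, γ⁻¹ * (H.dist u v : ℝ) - c ≤ (G.dist (f u) (f v) : ℝ) ∧
      (G.dist (f u) (f v) : ℝ) ≤ γ * (H.dist u v : ℝ) + c

/-! ### Basic graph properties -/

/-- Every vertex has finite degree. -/
def LocallyFiniteGraph {V : Type u} (G : SimpleGraph V) : Prop :=
  ∀ v : V, (G.neighborSet v).Finite

/-- The automorphism group of `G` has finitely many orbits on the vertex set. -/
def QuasiTransitive {V : Type u} (G : SimpleGraph V) : Prop :=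
  ∃ s : Set V, s.Finite ∧ ∀ v : V, ∃ u ∈ s, ∃ g : G ≃g G, g u = v

/-- The automorphism group of `G` acts transitively on the vertex set. -/
def VertexTransitive {V : Type u} (G : SimpleGraph V) : Prop :=
  ∀ u v : V, ∃ g : G ≃g G, g u = v

/-- `G` has exactly one end. -/
def OneEnded {V : Type u} (G : SimpleGraph V) : Prop :=
  Nonempty G.end ∧ Subsingleton G.end

/-- `G` and `H` have the same number of ends (in the sense `0, 1, 2, …, ∞`). -/
def SameNumberOfEnds {V : Type u} {W : Type v} (G : SimpleGraph V) (H : SimpleGraph W) : Prop :=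
  (Infinite G.end ∧ Infinite H.end) ∨
    (Finite G.end ∧ Finite H.end ∧ Nat.card G.end = Nat.card H.end)

/-- There is `n : ℕ` such that every two distinct ends of `G` can be separated by removing
at most `n` vertices. -/
def Accessible {V : Type u} (G : SimpleGraph V) : Prop :=
  ∃ n : ℕ, ∀ e e' : G.end, e ≠ e' →
    ∃ K : Finset V, K.card ≤ n ∧ e.val (Opposite.op K) ≠ e'.val (Opposite.op K)

/-- `T` is a tree all of whose vertices have degree `3`. -/
def CubicTree {W : Type u} (T : SimpleGraph W) : Prop :=
  T.IsTree ∧ ∀ v : W, (T.neighborSet v).ncard = 3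

/-! ### Tree amalgamations -/

/-- The bipartite graph on `VT1 ⊕ VT2` given by the relation `R`. -/
def bipGraph {VT1 VT2 : Type u} (R : VT1 → VT2 → Prop) : SimpleGraph (VT1 ⊕ VT2) :=
  SimpleGraph.fromRel fun x y =>
    match x, y with
    | Sum.inl a, Sum.inr b => R a b
    | _, _ => False

/-- All the data of a tree amalgamation `G1 ∗_T G2`: a semiregular tree (given by its
bipartition classes `VT1`, `VT2` and the adjacency relation `Tadj`), a labelling of the
edges of the tree by pairs of indices from `K1 × K2` such that the labels at each vertex of
`VTi` biject with `Ki` in the `i`-th coordinate, families of adhesion sets `S1`, `S2`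
(all of the same cardinality), and the gluing bijections `glue k l : S1 k → S2 l`. -/
structure TreeAmalgData {V1 V2 : Type u} (G1 : SimpleGraph V1) (G2 : SimpleGraph V2) :
    Type (u + 1) where
  VT1 : Type u
  VT2 : Type u
  K1 : Type u
  K2 : Type u
  Tadj : VT1 → VT2 → Prop
  isTree : (bipGraph Tadj).IsTree
  lab1 : ∀ a b, Tadj a b → K1
  lab2 : ∀ a b, Tadj a b → K2
  lab1_bij : ∀ a : VT1, Function.Bijective fun b : {b : VT2 // Tadj a b} => lab1 a b.1 b.2
  lab2_bij : ∀ b : VT2, Function.Bijective fun a : {a : VT1 // Tadj a b} => lab2 a.1 b a.2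
  S1 : K1 → Set V1
  S2 : K2 → Set V2
  S1_nonempty : ∀ k, (S1 k).Nonempty
  glue : K1 → K2 → V1 → V2
  glue_bij : ∀ k l, Set.BijOn (glue k l) (S1 k) (S2 l)

namespace TreeAmalgData

variable {V1 V2 : Type u} {G1 : SimpleGraph V1} {G2 : SimpleGraph V2}

/-- The vertex set of the graph `G1 + G2`. -/
abbrev PlusV (D : TreeAmalgData G1 G2) : Type u := (D.VT1 × V1) ⊕ (D.VT2 × V2)

/-- The relation describing the edges added between the copies `G1^u` and `G2^v`. -/
def cross (D : TreeAmalgData G1 G2) (p : D.VT1 × V1) (q : D.VT2 × V2) : Prop :=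
  ∃ h : D.Tadj p.1 q.1, p.2 ∈ D.S1 (D.lab1 p.1 q.1 h) ∧
    q.2 = D.glue (D.lab1 p.1 q.1 h) (D.lab2 p.1 q.1 h) p.2

def plusRel (D : TreeAmalgData G1 G2) : D.PlusV → D.PlusV → Prop
  | Sum.inl p, Sum.inl p' => p.1 = p'.1 ∧ G1.Adj p.2 p'.2
  | Sum.inr q, Sum.inr q' => q.1 = q'.1 ∧ G2.Adj q.2 q'.2
  | Sum.inl p, Sum.inr q => D.cross p q
  | Sum.inr _, Sum.inl _ => False

/-- The graph `G1 + G2`: disjoint copies of `G1` and `G2` along the tree, together with the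
added matching edges between adhesion sets. -/
def plusGraph (D : TreeAmalgData G1 G2) : SimpleGraph D.PlusV :=
  SimpleGraph.fromRel D.plusRel

/-- The relation identifying the endpoints of the added edges (which get contracted). -/
def idRel (D : TreeAmalgData G1 G2) : D.PlusV → D.PlusV → Prop :=
  fun x y => ∃ p q, x = Sum.inl p ∧ y = Sum.inr q ∧ D.cross p q

/-- Vertex set of the tree amalgamation `G1 ∗_T G2`. -/
abbrev AmalgV (D : TreeAmalgData G1 G2) : Type u := Quot D.idRel

/-- The canonical contraction map `ψ : V(G1 + G2) → V(G1 ∗_T G2)`. -/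
def toAmalg (D : TreeAmalgData G1 G2) : D.PlusV → D.AmalgV := Quot.mk _

/-- The tree amalgamation `G1 ∗_T G2`, obtained from `G1 + G2` by contracting all the
added edges. -/
def amalgGraph (D : TreeAmalgData G1 G2) : SimpleGraph D.AmalgV :=
  SimpleGraph.fromRel fun x y =>
    ∃ a b, x = D.toAmalg a ∧ y = D.toAmalg b ∧ D.plusGraph.Adj a b

/-- The tree vertex at which a vertex of `G1 + G2` lives. -/
def site (D : TreeAmalgData G1 G2) : D.PlusV → D.VT1 ⊕ D.VT2
  | Sum.inl p => Sum.inl p.1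
  | Sum.inr q => Sum.inr q.1

/-- The set of tree vertices hosting representatives of `x`; the identification size of `x`
is the number of its elements. -/
def support (D : TreeAmalgData G1 G2) (x : D.AmalgV) : Set (D.VT1 ⊕ D.VT2) :=
  {t | ∃ p, D.toAmalg p = x ∧ D.site p = t}

/-- Every vertex of `G1 ∗_T G2` has finite identification size. -/
def FiniteIdentification (D : TreeAmalgData G1 G2) : Prop :=
  ∀ x : D.AmalgV, (D.support x).Finite

/-- All adhesion sets are finite. -/
def FiniteAdhesion (D : TreeAmalgData G1 G2) : Prop :=
  (∀ k, (D.S1 k).Finite) ∧ ∀ l, (D.S2 l).Finite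

/-- The tree amalgamation is trivial: the contraction map restricts to a bijection on some
copy of `G1` or of `G2`. -/
def IsTrivial (D : TreeAmalgData G1 G2) : Prop :=
  (∃ a : D.VT1, Function.Bijective fun x : V1 => D.toAmalg (Sum.inl (a, x))) ∨
  ∃ b : D.VT2, Function.Bijective fun y : V2 => D.toAmalg (Sum.inr (b, y))

end TreeAmalgData

/-- Some group of automorphisms of `G` acts with finitely many orbits on the vertices of `G`
and with finitely many orbits on the family `S` of adhesion sets of `G`. -/
def GoodAction {V : Type u} (G : SimpleGraph V) {K : Type u} (S : K → Set V) : Prop :=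
  ∃ Γ : Subgroup (G ≃g G),
    (∃ s : Set V, s.Finite ∧ ∀ v : V, ∃ u ∈ s, ∃ g ∈ Γ, g u = v) ∧
    ∃ I : Set K, I.Finite ∧ ∀ k : K, ∃ k' ∈ I, ∃ g ∈ Γ, ⇑g '' S k' = S k

/-- A bundled graph. -/
structure BGraph : Type (u + 1) where
  V : Type u
  G : SimpleGraph V

/-- `Z` is (isomorphic to) a tree amalgamation of `X` and `Y` of finite adhesion and finite
identification. -/
def AmalgStep (X Y Z : BGraph.{u}) : Prop :=
  ∃ D : TreeAmalgData X.G Y.G,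
    D.FiniteAdhesion ∧ D.FiniteIdentification ∧ Nonempty (Z.G ≃g D.amalgGraph)

/-- `Z` is (isomorphic to) a tree amalgamation of `X` and `Y` of finite adhesion and finite
identification such that some group of automorphisms of each factor acts with finitely many
orbits on that factor and on the set of its adhesion sets. -/
def GoodAmalgStep (X Y Z : BGraph.{u}) : Prop :=
  ∃ D : TreeAmalgData X.G Y.G,
    D.FiniteAdhesion ∧ D.FiniteIdentification ∧
    GoodAction X.G D.S1 ∧ GoodAction Y.G D.S2 ∧ Nonempty (Z.G ≃g D.amalgGraph)

/-- `Z` is obtained from the list `l` of graphs by iterated tree amalgamations of finite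
adhesion and finite identification. -/
inductive IterAmalg : BGraph.{u} → List BGraph.{u} → Prop
  | single (X : BGraph) : IterAmalg X [X]
  | step {X Y Z : BGraph} {l1 l2 : List BGraph} :
      IterAmalg X l1 → IterAmalg Y l2 → AmalgStep X Y Z → IterAmalg Z (l1 ++ l2)

/-- `Z` is obtained from the list `l` of graphs by iterated tree amalgamations of finite
adhesion and finite identification with quasi-transitive actions on the factors and their
adhesion sets. -/
inductive GoodIterAmalg : BGraph.{u} → List BGraph.{u} → Prop
  | single (X : BGraph) : GoodIterAmalg X [X]
  | step {X Y Z : BGraph} {l1 l2 : List BGraph} :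
      GoodIterAmalg X l1 → GoodIterAmalg Y l2 → GoodAmalgStep X Y Z →
        GoodIterAmalg Z (l1 ++ l2)

/-- `l` is a factorisation of the graph `Gb`. -/
def IsFactorisation (Gb : BGraph.{u}) (l : List BGraph.{u}) : Prop :=
  (∀ X ∈ l, X.G.Connected ∧ LocallyFiniteGraph X.G ∧ QuasiTransitive X.G) ∧
    GoodIterAmalg Gb l

/-- A factorisation is terminal if every factor has at most one end. -/
def IsTerminal (l : List BGraph.{u}) : Prop := ∀ X ∈ l, Subsingleton X.G.end

namespace TQI

/-- A coarse correspondence between two graphs. -/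
def CE {V : Type u} {W : Type v} (G : SimpleGraph V) (H : SimpleGraph W) : Prop :=
  ∃ (R : V → W → Prop) (L : ℕ), (∀ x, ∃ w, R x w) ∧ (∀ w, ∃ x, R x w) ∧
    (∀ x x' w w', R x w → R x' w' → G.dist x x' ≤ 1 → H.dist w w' ≤ L) ∧
    (∀ x x' w w', R x w → R x' w' → H.dist w w' ≤ 1 → G.dist x x' ≤ L)

theorem CE.symm {V : Type u} {W : Type v} {G : SimpleGraph V} {H : SimpleGraph W}
    (h : CE G H) : CE H G := by
  obtain ⟨R, L, a, b, c, d⟩ := h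
  exact ⟨fun w x => R x w, L, b, a, fun x x' w w' h h' => d _ _ _ _ h h',
    fun x x' w w' h h' => c _ _ _ _ h h'⟩

theorem lip {V : Type u} {W : Type v} {G : SimpleGraph V} {H : SimpleGraph W}
    (hG : G.Connected) (hH : H.Connected) (R : V → W → Prop) (L : ℕ) (ht : ∀ x, ∃ w, R x w)
    (h : ∀ x x' w w', R x w → R x' w' → G.dist x x' ≤ 1 → H.dist w w' ≤ L)
    (x x' : V) (w w' : W) (hx : R x w) (hx' : R x' w') :
    H.dist w w' ≤ L * (G.dist x x' + 1) := by
  obtain ⟨p, hp⟩ := hG.exists_walk_length_eq_dist x x'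
  rw [← hp]
  clear hp
  induction p generalizing w with
  | nil => simpa using h _ _ _ _ hx hx' (by simp)
  | @cons a b c hab p ih =>
    obtain ⟨z, hz⟩ := ht b
    have h1 := ih z hz hx'
    have h2 := h _ _ _ _ hx hz (SimpleGraph.dist_eq_one_iff_adj.2 hab).le
    have h3 := hH.dist_triangle (u := w) (v := z) (w := w')
    rw [SimpleGraph.Walk.length_cons]
    nlinarith

theorem CE.trans {V : Type u} {W : Type v} {Z : Type*} {G : SimpleGraph V} {H : SimpleGraph W}
    {J : SimpleGraph Z} (hG : G.Connected) (hH : H.Connected) (hJ : J.Connected)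
    (h : CE G H) (h' : CE H J) : CE G J := by
  obtain ⟨R, L, a, b, c, d⟩ := h
  obtain ⟨R', L', a', b', c', d'⟩ := h'
  refine ⟨fun x z => ∃ w, R x w ∧ R' w z, L' * (L + 1) + L * (L' + 1), ?_, ?_, ?_, ?_⟩
  · intro x
    obtain ⟨w, hw⟩ := a x
    obtain ⟨z, hz⟩ := a' w
    exact ⟨z, w, hw, hz⟩
  · intro z
    obtain ⟨w, hw⟩ := b' z
    obtain ⟨x, hx⟩ := b w
    exact ⟨x, w, hx, hw⟩
  · rintro x x' z z' ⟨w, h1, h2⟩ ⟨w', h1', h2'⟩ hd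
    have e1 := c _ _ _ _ h1 h1' hd
    have e2 := lip hH hJ R' L' a' c' _ _ _ _ h2 h2'
    have : L' * (H.dist w w' + 1) ≤ L' * (L + 1) := by gcongr
    omega
  · rintro x x' z z' ⟨w, h1, h2⟩ ⟨w', h1', h2'⟩ hd
    have e1 := d' _ _ _ _ h2 h2' hd
    have e2 := lip hH hG (fun w x => R x w) L b (fun x x' w w' h h' => d _ _ _ _ h h') _ _ _ _ h1 h1'
    have : L * (H.dist w w' + 1) ≤ L * (L' + 1) := by gcongr
    omega

theorem CE.qi {V : Type u} {W : Type v} {G : SimpleGraph V} {H : SimpleGraph W}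
    (hG : G.Connected) (hH : H.Connected) (h : CE G H) : QuasiIsometric G H := by
  obtain ⟨R, L, a, b, c, d⟩ := h
  choose f hf using a
  refine ⟨L + 1, L + 1, f, by simp, by positivity, ?_, ?_⟩
  · intro x y
    have e1 := lip hG hH R L (fun x => ⟨f x, hf x⟩) c _ _ _ _ (hf x) (hf y)
    have e2 := lip hH hG (fun w x => R x w) L b (fun x x' w w' h h' => d _ _ _ _ h h')
      _ _ _ _ (hf x) (hf y)
    have e1' : (H.dist (f x) (f y) : ℝ) ≤ L * (G.dist x y + 1) := by exact_mod_cast e1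
    have e2' : (G.dist x y : ℝ) ≤ L * (H.dist (f x) (f y) + 1) := by exact_mod_cast e2
    have p1 : (0 : ℝ) ≤ G.dist x y := by positivity
    have p2 : (0 : ℝ) ≤ H.dist (f x) (f y) := by positivity
    have p3 : (0 : ℝ) ≤ L := by positivity
    constructor
    · rw [sub_le_iff_le_add, inv_mul_le_iff₀ (by positivity)]
      nlinarith
    · nlinarith
  · intro w
    obtain ⟨x, hx⟩ := b w
    refine ⟨x, ?_⟩
    have := c x x w (f x) hx (hf x) (by simp)
    have : (H.dist w (f x) : ℝ) ≤ L := by exact_mod_cast this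
    linarith

/-- The rooted binary tree. -/
def B : SimpleGraph (List Bool) := SimpleGraph.fromRel fun x y => ∃ b, x = b :: y

theorem B_adj (b : Bool) (w : List Bool) : B.Adj w (b :: w) := by
  refine (SimpleGraph.fromRel_adj _ _ _).2 ⟨?_, Or.inr ⟨b, rfl⟩⟩
  intro h
  have := congrArg List.length h
  simp at this

theorem B_conn : B.Connected := by
  have : ∀ w, B.Reachable [] w := by
    intro w
    induction w with
    | nil => exact SimpleGraph.Reachable.refl _
    | cons b w ih => exact ih.trans (B_adj b w).reachable
  exact (SimpleGraph.connected_iff _).2 ⟨fun x y => (this x).symm.trans (this y), ⟨[]⟩⟩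

theorem B_dist_cons (b : Bool) (w : List Bool) : B.dist w (b :: w) = 1 :=
  SimpleGraph.dist_eq_one_iff_adj.2 (B_adj b w)

section Model

variable {X : Type*} (root : X) (m : X → ℕ) (ch : X → ℕ → X)

/-- one step of the state machine -/
def step (b : Bool) (s : X × ℕ) : X × ℕ :=
  match b with
  | false => (ch s.1 s.2, 0)
  | true => if s.2 + 2 < m s.1 then (s.1, s.2 + 1) else (ch s.1 (s.2 + 1), 0)

/-- run the state machine -/
def run : List Bool → X × ℕ
  | [] => (root, 0)
  | b :: w => step m ch b (run w)

variable {root m ch}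
theorem run_valid
    (hm2 : ∀ x, 2 ≤ m x)
    (w : List Bool) : (run root m ch w).2 + 2 ≤ m (run root m ch w).1 := by
  induction w with
  | nil => exact hm2 _
  | cons b w ih =>
    cases b with
    | false => exact hm2 _
    | true =>
      simp only [run, step]
      split_ifs with h
      · simp; omega
      · exact hm2 _

theorem run_inj
    (hm2 : ∀ x, 2 ≤ m x)
    (hinj : ∀ x y i j, i < m x → j < m y → ch x i = ch y j → x = y ∧ i = j)
    (hroot : ∀ x i, i < m x → ch x i ≠ root)
    (w w' : List Bool) (h : run root m ch w = run root m ch w') : w = w' := by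
  have key : ∀ b w, run root m ch (b :: w) ≠ (root, 0) := by
    intro b w hh
    have hv := run_valid (root := root) (ch := ch) hm2 w
    cases b with
    | false =>
      simp only [run, step, Prod.mk.injEq] at hh
      exact hroot _ _ (by omega) hh.1
    | true =>
      simp only [run, step] at hh
      split_ifs at hh with h1
      · simp at hh
      · simp only [Prod.mk.injEq] at hh
        exact hroot _ _ (by omega) hh.1
  induction w generalizing w' with
  | nil =>
    cases w' with
    | nil => rfl
    | cons b w' => exact absurd h.symm (key b w')
  | cons b w ih =>
    cases w' with
    | nil => exact absurd h (key b w)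
    | cons b' w' =>
      have hv := run_valid (root := root) (ch := ch) hm2 w
      have hv' := run_valid (root := root) (ch := ch) hm2 w'
      have ih' := ih w'
      simp only [run] at h
      generalize run root m ch w = s at *
      generalize run root m ch w' = s' at *
      obtain ⟨x, i⟩ := s
      obtain ⟨y, j⟩ := s'
      simp only at hv hv'
      suffices b = b' ∧ x = y ∧ i = j by
        obtain ⟨rfl, rfl, rfl⟩ := this
        rw [ih' rfl]
      cases b <;> cases b' <;> simp only [step] at h
      · simp only [Prod.mk.injEq] at h
        exact ⟨rfl, hinj _ _ _ _ (by omega) (by omega) h.1⟩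
      · split_ifs at h with h1
        · simp at h
        · simp only [Prod.mk.injEq] at h
          obtain ⟨rfl, h2⟩ := hinj _ _ _ _ (by omega) (by omega) h.1
          omega
      · split_ifs at h with h1
        · simp at h
        · simp only [Prod.mk.injEq] at h
          obtain ⟨rfl, h2⟩ := hinj _ _ _ _ (by omega) (by omega) h.1
          omega
      · split_ifs at h with h1 h2 h2
        · simp only [Prod.mk.injEq] at h
          refine ⟨rfl, h.1, by omega⟩
        · simp at h
        · simp at h
        · simp only [Prod.mk.injEq] at h
          obtain ⟨rfl, h2⟩ := hinj _ _ _ _ (by omega) (by omega) h.1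
          exact ⟨rfl, rfl, by omega⟩

/-- the state from which a child is entered -/
theorem enter (p : X) (i : ℕ) (h2 : 2 ≤ m p) (hi : i < m p) : ∃ j b, j + 2 ≤ m p ∧
    step m ch b (p, j) = (ch p i, 0) := by
  by_cases h : i + 2 ≤ m p
  · exact ⟨i, false, h, rfl⟩
  · refine ⟨i - 1, true, by omega, ?_⟩
    simp only [step]
    rw [if_neg (by omega)]
    congr 2
    omega

theorem run_surj
    (hm2 : ∀ x, 2 ≤ m x)
    (dep : X → ℕ) (hdep : ∀ x i, i < m x → dep x < dep (ch x i))
    (hpar : ∀ x, x ≠ root → ∃ p i, i < m p ∧ ch p i = x)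
    (x : X) (i : ℕ) (hi : i + 2 ≤ m x) : ∃ w, run root m ch w = (x, i) := by
  suffices ∀ n x, dep x = n → ∀ i, i + 2 ≤ m x → ∃ w, run root m ch w = (x, i) from
    this _ x rfl i hi
  intro n
  induction n using Nat.strong_induction_on with
  | _ n ih =>
    intro x hx i
    induction i with
    | zero =>
      intro _
      by_cases hr : x = root
      · exact ⟨[], by rw [hr]; rfl⟩
      · obtain ⟨p, i, hi, rfl⟩ := hpar x hr
        obtain ⟨j, b, hj, hs⟩ := enter (ch := ch) p i (hm2 p) hi
        obtain ⟨w, hw⟩ := ih (dep p) (hx ▸ hdep p i hi) p rfl j hj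
        exact ⟨b :: w, by rw [run, hw, hs]⟩
    | succ i ih2 =>
      intro hi
      obtain ⟨w, hw⟩ := ih2 (by omega)
      refine ⟨true :: w, ?_⟩
      rw [run, hw]
      simp only [step]
      rw [if_pos (by omega)]

theorem dist_fiber
    (hm2 : ∀ x, 2 ≤ m x)
    (hinj : ∀ x y i j, i < m x → j < m y → ch x i = ch y j → x = y ∧ i = j)
    (hroot : ∀ x i, i < m x → ch x i ≠ root)
    (w0 : List Bool) (x : X) (h0 : run root m ch w0 = (x, 0)) (i : ℕ)
    (w : List Bool) (hw : run root m ch w = (x, i)) : B.dist w0 w ≤ i := by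
  have hv := run_valid (root := root) (ch := ch) hm2 w
  rw [hw] at hv
  simp only at hv
  have : ∀ j, j + 2 ≤ m x → run root m ch (List.replicate j true ++ w0) = (x, j) ∧
      B.dist w0 (List.replicate j true ++ w0) ≤ j := by
    intro j
    induction j with
    | zero => simp [h0]
    | succ j ih =>
      intro hj
      obtain ⟨e1, e2⟩ := ih (by omega)
      rw [List.replicate_succ, List.cons_append, run, e1]
      refine ⟨?_, ?_⟩
      · simp only [step]
        rw [if_pos (by omega)]
      · have := B_conn.dist_triangle (u := w0) (v := List.replicate j true ++ w0)
          (w := true :: (List.replicate j true ++ w0))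
        rw [B_dist_cons] at this
        omega
  obtain ⟨e1, e2⟩ := this i hv
  rwa [run_inj hm2 hinj hroot w _ (hw.trans e1.symm)]

theorem dist_same {M : ℕ}
    (hm2 : ∀ x, 2 ≤ m x)
    (hmM : ∀ x, m x ≤ M)
    (hinj : ∀ x y i j, i < m x → j < m y → ch x i = ch y j → x = y ∧ i = j)
    (hroot : ∀ x i, i < m x → ch x i ≠ root)
    (dep : X → ℕ) (hdep : ∀ x i, i < m x → dep x < dep (ch x i))
    (hpar : ∀ x, x ≠ root → ∃ p i, i < m p ∧ ch p i = x)
    (w w' : List Bool) (h : (run root m ch w).1 = (run root m ch w').1) :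
    B.dist w w' ≤ 2 * M := by
  obtain ⟨w0, h0⟩ := run_surj hm2 dep hdep hpar (run root m ch w).1 0 (hm2 _)
  have e1 := dist_fiber hm2 hinj hroot w0 _ h0 (run root m ch w).2 w rfl
  have e2 := dist_fiber hm2 hinj hroot w0 _ h0 (run root m ch w').2 w' (by rw [h])
  have v1 := run_valid (root := root) (ch := ch) hm2 w
  have v2 := run_valid (root := root) (ch := ch) hm2 w'
  have u1 := hmM (run root m ch w).1
  have u2 := hmM (run root m ch w').1
  have t := B_conn.dist_triangle (u := w) (v := w0) (w := w')
  rw [SimpleGraph.dist_comm (u := w) (v := w0)] at t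
  omega

theorem dist_child {M : ℕ}
    (hm2 : ∀ x, 2 ≤ m x)
    (hmM : ∀ x, m x ≤ M)
    (hinj : ∀ x y i j, i < m x → j < m y → ch x i = ch y j → x = y ∧ i = j)
    (hroot : ∀ x i, i < m x → ch x i ≠ root)
    (dep : X → ℕ) (hdep : ∀ x i, i < m x → dep x < dep (ch x i))
    (hpar : ∀ x, x ≠ root → ∃ p i, i < m p ∧ ch p i = x)
    (w w' : List Bool) (i : ℕ) (hi : i < m (run root m ch w).1)
    (h : (run root m ch w').1 = ch (run root m ch w).1 i) :
    B.dist w w' ≤ 4 * M + 1 := by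
  obtain ⟨j, b, hj, hs⟩ := enter (ch := ch) _ i (hm2 _) hi
  obtain ⟨w1, h1⟩ := run_surj hm2 dep hdep hpar (run root m ch w).1 j hj
  have h2 : run root m ch (b :: w1) = (ch (run root m ch w).1 i, 0) := by rw [run, h1, hs]
  have e1 := dist_same hm2 hmM hinj hroot dep hdep hpar w w1 (by rw [h1])
  have e2 := dist_same hm2 hmM hinj hroot dep hdep hpar (b :: w1) w' (by rw [h2, h])
  have t := B_conn.dist_triangle (u := w) (v := w1) (w := w')
  have t2 := B_conn.dist_triangle (u := w1) (v := b :: w1) (w := w')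
  rw [B_dist_cons] at t2
  omega

theorem run_step
    (hm2 : ∀ x, 2 ≤ m x)
    (b : Bool) (w : List Bool) : (run root m ch (b :: w)).1 = (run root m ch w).1 ∨
    ∃ i, i < m (run root m ch w).1 ∧ (run root m ch (b :: w)).1 = ch (run root m ch w).1 i := by
  have hv := run_valid (root := root) (ch := ch) hm2 w
  cases b with
  | false => exact Or.inr ⟨_, by omega, rfl⟩
  | true =>
    simp only [run, step]
    split_ifs with h
    · exact Or.inl rfl
    · exact Or.inr ⟨_, by omega, rfl⟩

end Model

section Tree

variable {V : Type u} {T : SimpleGraph V}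

/-- the vertices `y` such that `x` lies on a geodesic from `a` to `y` -/
def S (T : SimpleGraph V) (a x : V) : Set V := {y | T.dist a y = T.dist a x + T.dist x y}

theorem mem_S {a x y : V} : y ∈ S T a x ↔ T.dist a y = T.dist a x + T.dist x y := Iff.rfl

theorem self_mem_S (a x : V) : x ∈ S T a x := by simp [mem_S]

theorem S_trans (hc : T.Connected) {a b x y : V} (hx : x ∈ S T a b) (hy : y ∈ S T a x) :
    y ∈ S T a b ∧ T.dist b y = T.dist b x + T.dist x y := by
  rw [mem_S] at *
  have := hc.dist_triangle (u := a) (v := b) (w := y)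
  have := hc.dist_triangle (u := b) (v := x) (w := y)
  omega

theorem exists_between (hc : T.Connected) (x y : V) (j : ℕ) (hj : j ≤ T.dist x y) :
    ∃ z, T.dist x z = j ∧ T.dist x y = j + T.dist z y := by
  obtain ⟨p, hp⟩ := hc.exists_walk_length_eq_dist x y
  refine ⟨p.getVert j, ?_⟩
  have h1 := SimpleGraph.dist_le (p.take j)
  have h2 := SimpleGraph.dist_le (p.drop j)
  rw [SimpleGraph.Walk.take_length] at h1
  rw [SimpleGraph.Walk.drop_length] at h2
  have := hc.dist_triangle (u := x) (v := p.getVert j) (w := y)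
  omega

theorem exists_anc (hc : T.Connected) {a x y : V} (hy : y ∈ S T a x) (j : ℕ)
    (hj : j ≤ T.dist x y) :
    ∃ z, z ∈ S T a x ∧ y ∈ S T a z ∧ T.dist x z = j := by
  obtain ⟨z, h1, h2⟩ := exists_between hc x y j hj
  rw [mem_S] at hy
  have := hc.dist_triangle (u := a) (v := x) (w := z)
  have := hc.dist_triangle (u := a) (v := z) (w := y)
  refine ⟨z, ?_, ?_, h1⟩ <;> rw [mem_S] <;> omega

theorem walk_in_S (hc : T.Connected) {a x y : V} (hy : y ∈ S T a x) :
    ∃ p : T.Walk x y, ∀ z ∈ p.support, z ∈ S T a x := by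
  obtain ⟨p, hp⟩ := hc.exists_walk_length_eq_dist x y
  refine ⟨p, fun z hz => ?_⟩
  obtain ⟨q, r, rfl⟩ := SimpleGraph.Walk.mem_support_iff_exists_append.1 hz
  have h1 := SimpleGraph.dist_le q
  have h2 := SimpleGraph.dist_le r
  rw [SimpleGraph.Walk.length_append] at hp
  rw [mem_S] at *
  have := hc.dist_triangle (u := a) (v := x) (w := z)
  have := hc.dist_triangle (u := a) (v := z) (w := y)
  omega

theorem walk_in_S2 (hc : T.Connected) {a x y y' : V} (hy : y ∈ S T a x) (hy' : y' ∈ S T a x) :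
    ∃ p : T.Walk y y', ∀ z ∈ p.support, z ∈ S T a x := by
  obtain ⟨p, hp⟩ := walk_in_S hc hy
  obtain ⟨q, hq⟩ := walk_in_S hc hy'
  refine ⟨p.reverse.append q, fun z hz => ?_⟩
  rw [SimpleGraph.Walk.mem_support_append_iff, SimpleGraph.Walk.support_reverse,
    List.mem_reverse] at hz
  exact hz.elim (hp z) (hq z)

theorem mem_S_or (hT : T.IsTree) {a b : V} (hab : T.Adj a b) (y : V) :
    y ∈ S T a b ∨ y ∈ S T b a := by
  have h1 := SimpleGraph.dist_eq_one_iff_adj.2 hab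
  have h2 := SimpleGraph.dist_eq_one_iff_adj.2 hab.symm
  rw [mem_S, mem_S, h1, h2, SimpleGraph.dist_comm (v := y), SimpleGraph.dist_comm (u := b) (v := y)]
  have := hT.dist_eq_dist_add_one_of_adj y hab
  omega

theorem not_mem_both (_hT : T.IsTree) {a b : V} (hab : T.Adj a b) {y : V}
    (h : y ∈ S T a b) : y ∉ S T b a := by
  have h1 := SimpleGraph.dist_eq_one_iff_adj.2 hab
  have h2 := SimpleGraph.dist_eq_one_iff_adj.2 hab.symm
  rw [mem_S] at *
  omega

theorem dist_across (hT : T.IsTree) {a b : V} (hab : T.Adj a b) {r y : V}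
    (hy : y ∈ S T a b) (hr : r ∈ S T b a) : T.dist r y = T.dist r a + 1 + T.dist b y := by
  classical
  have hc := hT.connected
  obtain ⟨p, hp⟩ := walk_in_S hc hy
  obtain ⟨q, hq⟩ := walk_in_S hc hr
  obtain ⟨w, hw⟩ := hc.exists_walk_length_eq_dist r y
  have hbr := SimpleGraph.isBridge_iff_forall_walk_mem_edges.1
    (SimpleGraph.isAcyclic_iff_forall_adj_isBridge.1 hT.isAcyclic hab)
    ((q.append w).append p.reverse)
  rw [SimpleGraph.Walk.edges_append, SimpleGraph.Walk.edges_append, List.mem_append,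
    List.mem_append, SimpleGraph.Walk.edges_reverse, List.mem_reverse] at hbr
  have ha : a ∈ w.support := by
    rcases hbr with (h | h) | h
    · exact absurd (hq b (q.snd_mem_support_of_mem_edges h)) (not_mem_both hT hab (self_mem_S a b))
    · exact w.fst_mem_support_of_mem_edges h
    · exact absurd (self_mem_S b a) (not_mem_both hT hab (hp a (p.fst_mem_support_of_mem_edges h)))
  obtain ⟨w1, w2, rfl⟩ := SimpleGraph.Walk.mem_support_iff_exists_append.1 ha
  have h1 := SimpleGraph.dist_le w1
  have h2 := SimpleGraph.dist_le w2
  rw [SimpleGraph.Walk.length_append] at hw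
  have := hc.dist_triangle (u := r) (v := a) (w := y)
  rw [mem_S, SimpleGraph.dist_eq_one_iff_adj.2 hab] at hy
  omega

/-- changing the root -/
theorem S_root (hT : T.IsTree) {a b r : V} (hab : T.Adj a b)
    (hr : T.dist r b = T.dist r a + 1) :
    S T r b = S T a b ∧ ∀ x ∈ S T a b, S T r x = S T a x := by
  have hc := hT.connected
  have h1 := SimpleGraph.dist_eq_one_iff_adj.2 hab
  have hr' : r ∈ S T b a := by
    rw [mem_S, SimpleGraph.dist_comm, hr, SimpleGraph.dist_comm (u := b), h1,
      SimpleGraph.dist_comm (u := a)]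
    omega
  have hsub : ∀ y, y ∈ S T r b → y ∈ S T a b := by
    intro y hy
    rw [mem_S] at *
    have := hc.dist_triangle (u := r) (v := a) (w := y)
    have := hc.dist_triangle (u := a) (v := b) (w := y)
    omega
  have hsup : ∀ y, y ∈ S T a b → T.dist r y = T.dist r a + T.dist a y := by
    intro y hy
    rw [dist_across hT hab hy hr', mem_S.1 hy]
    omega
  have hE : S T r b = S T a b := by
    ext y
    refine ⟨hsub y, fun hy => ?_⟩
    have := hsup y hy
    rw [mem_S] at *
    omega
  refine ⟨hE, fun x hx => ?_⟩
  have hx' := hsup x hx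
  ext y
  constructor
  · intro hy
    have := hsup y (hE ▸ (S_trans hc (hE ▸ hx) hy).1)
    rw [mem_S] at *
    omega
  · intro hy
    have := hsup y (S_trans hc hx hy).1
    rw [mem_S] at *
    omega

theorem anc_unique (hT : T.IsTree) {a x x' y : V} (h : y ∈ S T a x) (h' : y ∈ S T a x')
    (hd : T.dist a x = T.dist a x') : x = x' := by
  have hc := hT.connected
  rw [mem_S] at h h'
  obtain ⟨p, hp⟩ := hc.exists_walk_length_eq_dist a x
  obtain ⟨p', hp'⟩ := hc.exists_walk_length_eq_dist a x'
  obtain ⟨q, hq⟩ := hc.exists_walk_length_eq_dist x y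
  obtain ⟨q', hq'⟩ := hc.exists_walk_length_eq_dist x' y
  have e1 : (p.append q).IsPath := SimpleGraph.Walk.isPath_of_length_eq_dist _ (by
    rw [SimpleGraph.Walk.length_append]; omega)
  have e2 : (p'.append q').IsPath := SimpleGraph.Walk.isPath_of_length_eq_dist _ (by
    rw [SimpleGraph.Walk.length_append]; omega)
  have e := congrArg Subtype.val ((hT.isAcyclic.subsingleton_path a y).elim ⟨_, e1⟩ ⟨_, e2⟩)
  simp only at e
  have e3 := congrArg (fun w => w.getVert (T.dist a x)) e
  simp only [SimpleGraph.Walk.getVert_append] at e3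
  rw [if_neg (by omega), if_neg (by omega)] at e3
  rw [show T.dist a x - p.length = 0 by omega, show T.dist a x - p'.length = 0 by omega] at e3
  simpa using e3

theorem anc_comparable (hT : T.IsTree) {a x x' y : V} (h : y ∈ S T a x) (h' : y ∈ S T a x')
    (hd : T.dist a x ≤ T.dist a x') : x' ∈ S T a x := by
  have hc := hT.connected
  obtain ⟨z, h1, h2, h3⟩ := exists_anc hc (a := a) (x := a) (y := x') (by simp [mem_S]) _ hd
  have := (S_trans hc h2 h').1
  rwa [anc_unique hT h this h3.symm]

theorem ball_finite (hc : T.Connected) (hl : LocallyFiniteGraph T) (a : V) (n : ℕ) :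
    {y | T.dist a y ≤ n}.Finite := by
  induction n with
  | zero =>
    refine (Set.finite_singleton a).subset fun y hy => ?_
    simp only [Set.mem_ofPred_eq, Nat.le_zero, hc.dist_eq_zero_iff] at hy
    exact hy.symm
  | succ n ih =>
    refine (ih.union (ih.biUnion fun z _ => hl z)).subset fun y hy => ?_
    by_cases h : T.dist a y ≤ n
    · exact Or.inl h
    · right
      have hy' : T.dist a y = n + 1 := le_antisymm hy (by omega)
      obtain ⟨z, h1, h2⟩ := exists_between hc a y n (by omega)
      refine Set.mem_biUnion (x := z) h1.le ?_
      exact SimpleGraph.dist_eq_one_iff_adj.1 (by omega)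

theorem infinite_deep (hc : T.Connected) (hl : LocallyFiniteGraph T) {a x : V} (C : Set V)
    (hC : C ⊆ S T a x) (hinf : C.Infinite) (k : ℕ) :
    ∃ z, z ∈ S T a x ∧ T.dist x z = k ∧ (C ∩ S T a z).Infinite := by
  by_contra! hcon
  apply hinf
  have hb := ball_finite hc hl x k
  have hfin : (⋃ z ∈ {z | T.dist x z ≤ k}, {y | y ∈ C ∩ S T a z ∧ z ∈ S T a x ∧ T.dist x z = k}).Finite := by
    refine hb.biUnion fun z _ => ?_
    by_cases h : z ∈ S T a x ∧ T.dist x z = k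
    · exact (hcon z h.1 h.2).subset fun y hy => hy.1
    · convert Set.finite_empty
      ext y
      simp only [Set.mem_ofPred_eq, Set.mem_empty_iff_false, iff_false]
      tauto
  refine (hb.union hfin).subset fun y hy => ?_
  by_cases h : T.dist x y ≤ k
  · exact Or.inl h
  · right
    obtain ⟨z, h1, h2, h3⟩ := exists_anc hc (hC hy) k (by omega)
    exact Set.mem_biUnion (x := z) h3.le ⟨⟨hy, h2⟩, h1, h3⟩

/-- An infinite branch has infinite sub-branches at every depth. -/
theorem infinite_child (hc : T.Connected) (hl : LocallyFiniteGraph T) {a x : V}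
    (h : (S T a x).Infinite) (k : ℕ) :
    ∃ z, z ∈ S T a x ∧ T.dist x z = k ∧ (S T a z).Infinite := by
  obtain ⟨z, h1, h2, h3⟩ := infinite_deep hc hl _ subset_rfl h k
  exact ⟨z, h1, h2, h3.mono Set.inter_subset_right⟩

theorem dist_iso (g : T ≃g T) (x y : V) : T.dist (g x) (g y) = T.dist x y := by
  have key : ∀ (g : T ≃g T) (x y : V), T.Reachable x y → T.dist (g x) (g y) ≤ T.dist x y := by
    intro g x y h
    obtain ⟨p, hp⟩ := h.exists_walk_length_eq_dist
    rw [← hp]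
    have := SimpleGraph.dist_le (p.map g.toHom)
    rwa [SimpleGraph.Walk.length_map] at this
  by_cases h : T.Reachable x y
  · refine le_antisymm (key g x y h) ?_
    have := key g.symm (g x) (g y) (h.map g.toHom)
    simpa using this
  · rw [SimpleGraph.dist_eq_zero_of_not_reachable h, SimpleGraph.dist_eq_zero_of_not_reachable]
    intro h'
    exact h (by simpa using h'.map g.symm.toHom)

theorem mem_S_iso (g : T ≃g T) (a x y : V) : g y ∈ S T (g a) (g x) ↔ y ∈ S T a x := by
  simp only [mem_S, dist_iso]

theorem S_iso (g : T ≃g T) (a x : V) : S T (g a) (g x) = g '' S T a x := by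
  ext y
  constructor
  · intro hy
    refine ⟨g.symm y, ?_, by simp⟩
    rw [← mem_S_iso g]
    simpa using hy
  · rintro ⟨z, hz, rfl⟩
    exact (mem_S_iso g _ _ _).2 hz

theorem S_iso_inf (g : T ≃g T) (a x : V) : (S T (g a) (g x)).Infinite ↔ (S T a x).Infinite := by
  rw [S_iso, Set.infinite_image_iff g.injective.injOn]

theorem unif {α : Type*} {s : Set α} (hs : s.Finite) (P : α → ℕ → Prop)
    (hmono : ∀ x i j, i ≤ j → P x i → P x j) (h : ∀ x ∈ s, ∃ k, P x k) :
    ∃ k, ∀ x ∈ s, P x k := by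
  induction s, hs using Set.Finite.induction_on with
  | empty => exact ⟨0, fun x hx => absurd hx (Set.notMem_empty x)⟩
  | @insert a s ha hs ih =>
    obtain ⟨k, hk⟩ := ih fun x hx => h x (Or.inr hx)
    obtain ⟨l, hl⟩ := h a (Or.inl rfl)
    refine ⟨max k l, fun x hx => ?_⟩
    rcases hx with rfl | hx
    · exact hmono _ _ _ (le_max_right _ _) hl
    · exact hmono _ _ _ (le_max_left _ _) (hk x hx)

theorem unif_vertex (hq : QuasiTransitive T) (P : V → ℕ → Prop)
    (hmono : ∀ x i j, i ≤ j → P x i → P x j) (hinv : ∀ (g : T ≃g T) x k, P x k → P (g x) k)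
    (h : ∀ x, ∃ k, P x k) : ∃ k, ∀ x, P x k := by
  obtain ⟨s, hs, hq⟩ := hq
  obtain ⟨k, hk⟩ := unif hs P hmono fun x _ => h x
  refine ⟨k, fun x => ?_⟩
  obtain ⟨y, hy, g, rfl⟩ := hq x
  exact hinv g y k (hk y hy)

theorem unif_edge (hq : QuasiTransitive T) (hl : LocallyFiniteGraph T) (P : V → V → ℕ → Prop)
    (hmono : ∀ a b i j, T.Adj a b → i ≤ j → P a b i → P a b j)
    (hinv : ∀ (g : T ≃g T) a b k, P a b k → P (g a) (g b) k)
    (h : ∀ a b, T.Adj a b → ∃ k, P a b k) : ∃ k, ∀ a b, T.Adj a b → P a b k := by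
  refine unif_vertex hq (fun a k => ∀ b, T.Adj a b → P a b k) ?_ ?_ ?_
  · intro a i j hij h b hab
    exact hmono a b i j hab hij (h b hab)
  · intro g a k h b hab
    have : T.Adj a (g.symm b) := by
      rw [← g.map_adj_iff]
      simpa using hab
    simpa using hinv g _ _ _ (h _ this)
  · intro a
    suffices ∃ k, ∀ b ∈ T.neighborSet a, T.Adj a b → P a b k by
      obtain ⟨k, hk⟩ := this
      exact ⟨k, fun b hb => hk b hb hb⟩
    refine unif (hl a) (fun b k => T.Adj a b → P a b k) ?_ ?_
    · intro b i j hij h hab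
      exact hmono a b i j hab hij (h hab)
    · intro b hb
      obtain ⟨k, hk⟩ := h a b hb
      exact ⟨k, fun _ => hk⟩

/-- three infinite sets separated by the finite set `K` -/
def Sep3 (T : SimpleGraph V) (K : Set V) (C : Fin 3 → Set V) : Prop :=
  (∀ i, (C i).Infinite) ∧ ∀ i j, i ≠ j → ∀ x ∈ C i, ∀ y ∈ C j, ∀ p : T.Walk x y,
    ∃ z ∈ K, z ∈ p.support

theorem Sep3.iso {K : Set V} {C : Fin 3 → Set V} (h : Sep3 T K C) (g : T ≃g T) :
    Sep3 T (g '' K) (fun i => g '' C i) := by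
  refine ⟨fun i => (h.1 i).image g.injective.injOn, ?_⟩
  rintro i j hij _ ⟨x, hx, rfl⟩ _ ⟨y, hy, rfl⟩ p
  obtain ⟨z, hz, hz'⟩ := h.2 i j hij x hx y hy
    ((p.map g.symm.toHom).copy (by simp) (by simp))
  refine ⟨g z, ⟨z, hz, rfl⟩, ?_⟩
  simp only [SimpleGraph.Walk.support_copy, SimpleGraph.Walk.support_map, List.mem_map] at hz'
  obtain ⟨w, hw, rfl⟩ := hz'
  simpa using hw

theorem end_inf (e : T.end) (K : (Finset V)ᵒᵖ) :
    (SimpleGraph.ComponentCompl.supp (e.val K)).Infinite := by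
  refine (SimpleGraph.ComponentCompl.infinite_iff_in_all_ranges (e.val K)).mpr (fun L h => ?_)
  change Opposite.unop K ⊆ Opposite.unop (Opposite.op L) at h
  exact ⟨e.val (Opposite.op L), (e.prop (CategoryTheory.opHomOfLE h))⟩

theorem exists_sep3 (he : Infinite T.end) : ∃ (K : Set V) (C : Fin 3 → Set V),
    K.Finite ∧ Sep3 T K C := by
  classical
  let e : Fin 3 → T.end := fun i => Infinite.natEmbedding T.end i
  have hinj : ∀ i j, i ≠ j → e i ≠ e j := fun i j hij h =>
    hij (Fin.ext ((Infinite.natEmbedding T.end).injective h))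
  have hK : ∀ i j, ∃ K : Finset V, i ≠ j →
      (e i).val (Opposite.op K) ≠ (e j).val (Opposite.op K) := by
    intro i j
    by_cases hij : i = j
    · exact ⟨∅, fun h => absurd hij h⟩
    · by_contra! hcon
      apply hinj i j hij
      apply Subtype.ext
      funext K
      exact (hcon K.unop).2
  choose K hK using hK
  obtain ⟨L, hL⟩ : ∃ L : Finset V, ∀ i j, K i j ⊆ L := by
    refine ⟨Finset.univ.biUnion fun i => Finset.univ.biUnion fun j => K i j, fun i j z hz => ?_⟩
    simp only [Finset.mem_biUnion, Finset.mem_univ, true_and]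
    exact ⟨i, j, hz⟩
  have hne : ∀ i j, i ≠ j → (e i).val (Opposite.op L) ≠ (e j).val (Opposite.op L) := by
    intro i j hij h
    apply hK i j hij
    have hle : Opposite.unop (Opposite.op (K i j)) ≤ Opposite.unop (Opposite.op L) := hL i j
    have h1 := (e i).prop (CategoryTheory.opHomOfLE hle)
    have h2 := (e j).prop (CategoryTheory.opHomOfLE hle)
    exact (h1.symm.trans (congrArg _ h)).trans h2
  refine ⟨L, fun i => SimpleGraph.ComponentCompl.supp ((e i).val (Opposite.op L)),
    L.finite_toSet, fun i => end_inf (e i) _, ?_⟩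
  intro i j hij x hx y hy p
  by_contra! hcon
  apply hne i j hij
  obtain ⟨hx1, hx2⟩ := hx
  obtain ⟨hy1, hy2⟩ := hy
  rw [← hx2, ← hy2]
  apply SimpleGraph.ConnectedComponent.sound
  exact ⟨p.induce _ fun z hz hzL => hcon z hzL hz⟩

/-- There are two infinite sub-branches at depth `k`. -/
def Q (T : SimpleGraph V) (a b : V) (k : ℕ) : Prop :=
  ∃ x y, x ≠ y ∧ x ∈ S T a b ∧ y ∈ S T a b ∧ T.dist b x = k ∧ T.dist b y = k ∧
    (S T a x).Infinite ∧ (S T a y).Infinite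

theorem exists_Q (hT : T.IsTree) (hl : LocallyFiniteGraph T) (he : Infinite T.end)
    (hq : QuasiTransitive T) (a b : V) (hab : T.Adj a b) (hinf : (S T a b).Infinite) :
    ∃ k, Q T a b k := by
  have hc := hT.connected
  obtain ⟨K, C, hK, hsep⟩ := exists_sep3 he
  obtain ⟨s, hs, hq⟩ := hq
  obtain ⟨N, hN⟩ : ∃ N, ∀ o ∈ s, ∀ z ∈ K, T.dist o z ≤ N := by
    refine unif hs (fun o N => ∀ z ∈ K, T.dist o z ≤ N) (fun o i j hij h z hz =>
      (h z hz).trans hij) fun o _ => ?_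
    exact unif hK (fun z N => T.dist o z ≤ N) (fun z i j hij h => h.trans hij)
      fun z _ => ⟨_, le_rfl⟩
  obtain ⟨z, hz1, hz2, -⟩ := infinite_child hc hl hinf N
  obtain ⟨o, ho, g, rfl⟩ := hq z
  have hsep' := hsep.iso g
  have hK' : (g '' K).Finite := hK.image g
  have hsub : ∀ z ∈ g '' K, z ∉ S T b a := by
    rintro _ ⟨w, hw, rfl⟩ hcon
    have h1 := dist_across hT hab hz1 hcon
    rw [dist_iso, SimpleGraph.dist_comm] at h1
    have := hN o ho w hw
    omega
  generalize g '' K = K' at *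
  generalize (fun i => g '' C i) = C' at *
  clear hsep hK hN
  have hpair : ∀ i j, i ≠ j → C' i ⊆ S T a b ∨ C' j ⊆ S T a b := by
    intro i j hij
    by_contra! hcon
    obtain ⟨h1, h2⟩ := hcon
    obtain ⟨x, hx, hx'⟩ := Set.not_subset.1 h1
    obtain ⟨y, hy, hy'⟩ := Set.not_subset.1 h2
    obtain ⟨p, hp⟩ := walk_in_S2 hc ((mem_S_or hT hab x).resolve_left hx')
      ((mem_S_or hT hab y).resolve_left hy')
    obtain ⟨w, hw, hw'⟩ := hsep'.2 i j hij x hx y hy p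
    exact hsub w hw (hp w hw')
  obtain ⟨i, j, hij, hi, hj⟩ : ∃ i j, i ≠ j ∧ C' i ⊆ S T a b ∧ C' j ⊆ S T a b := by
    have h01 := hpair 0 1 (by decide)
    have h02 := hpair 0 2 (by decide)
    have h12 := hpair 1 2 (by decide)
    by_cases h0 : C' 0 ⊆ S T a b
    · rcases h12 with h | h
      · exact ⟨0, 1, by decide, h0, h⟩
      · exact ⟨0, 2, by decide, h0, h⟩
    · exact ⟨1, 2, by decide, h01.resolve_left h0, h02.resolve_left h0⟩
  obtain ⟨k, hk⟩ : ∃ k, ∀ z ∈ K', T.dist b z < k :=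
    unif hK' (fun z k => T.dist b z < k) (fun z i j hij h => lt_of_lt_of_le h hij)
      fun z _ => ⟨_, Nat.lt_succ_self _⟩
  obtain ⟨x, hx1, hx2, hx3⟩ := infinite_deep hc hl _ hi (hsep'.1 i) k
  obtain ⟨y, hy1, hy2, hy3⟩ := infinite_deep hc hl _ hj (hsep'.1 j) k
  refine ⟨k, x, y, ?_, hx1, hy1, hx2, hy2, hx3.mono Set.inter_subset_right,
    hy3.mono Set.inter_subset_right⟩
  rintro rfl
  obtain ⟨p, hp1, hp2⟩ := hx3.nonempty
  obtain ⟨q, hq1, hq2⟩ := hy3.nonempty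
  obtain ⟨w, hw⟩ := walk_in_S2 hc hp2 hq2
  obtain ⟨z, hz, hz'⟩ := hsep'.2 i j hij p hp1 q hq1 w
  have := (S_trans hc hx1 (hw z hz')).2
  have := hk z hz
  omega

theorem Q_mono (hT : T.IsTree) (hl : LocallyFiniteGraph T) (a b : V) (i j : ℕ) (hij : i ≤ j)
    (h : Q T a b i) : Q T a b j := by
  have hc := hT.connected
  obtain ⟨x, y, hxy, hx, hy, dx, dy, ix, iy⟩ := h
  obtain ⟨x', hx', dx', ix'⟩ := infinite_child hc hl ix (j - i)
  obtain ⟨y', hy', dy', iy'⟩ := infinite_child hc hl iy (j - i)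
  obtain ⟨ex, fx⟩ := S_trans hc hx hx'
  obtain ⟨ey, fy⟩ := S_trans hc hy hy'
  refine ⟨x', y', ?_, ex, ey, by omega, by omega, ix', iy'⟩
  rintro rfl
  refine hxy (anc_unique hT hx' hy' ?_)
  rw [mem_S] at hx hy
  omega

theorem exists_Q_unif (hT : T.IsTree) (hl : LocallyFiniteGraph T) (he : Infinite T.end)
    (hq : QuasiTransitive T) : ∃ k, ∀ a b, T.Adj a b → (S T a b).Infinite → Q T a b k := by
  refine unif_edge hq hl (fun a b k => (S T a b).Infinite → Q T a b k) ?_ ?_ ?_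
  · intro a b i j _ hij h hi
    exact Q_mono hT hl a b i j hij (h hi)
  · intro g a b k h hi
    obtain ⟨x, y, hxy, hx, hy, dx, dy, ix, iy⟩ := h ((S_iso_inf g a b).1 hi)
    refine ⟨g x, g y, g.injective.ne hxy, (mem_S_iso g _ _ _).2 hx, (mem_S_iso g _ _ _).2 hy,
      by rwa [dist_iso], by rwa [dist_iso], (S_iso_inf g _ _).2 ix, (S_iso_inf g _ _).2 iy⟩
  · intro a b hab
    by_cases h : (S T a b).Infinite
    · obtain ⟨k, hk⟩ := exists_Q hT hl he hq a b hab h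
      exact ⟨k, fun _ => hk⟩
    · exact ⟨0, fun h' => absurd h' h⟩

theorem exists_height (hl : LocallyFiniteGraph T)
    (hq : QuasiTransitive T) : ∃ k, ∀ a b, T.Adj a b → (S T a b).Finite →
      ∀ y ∈ S T a b, T.dist b y ≤ k := by
  refine unif_edge hq hl (fun a b k => (S T a b).Finite → ∀ y ∈ S T a b, T.dist b y ≤ k) ?_ ?_ ?_
  · intro a b i j _ hij h hf y hy
    exact (h hf y hy).trans hij
  · intro g a b k h hf y hy
    rw [S_iso] at hf hy
    obtain ⟨z, hz, rfl⟩ := hy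
    rw [dist_iso]
    exact h (Set.Finite.of_finite_image hf g.injective.injOn) z hz
  · intro a b _
    by_cases hf : (S T a b).Finite
    · obtain ⟨k, hk⟩ := unif hf (fun y k => T.dist b y ≤ k) (fun z i j hij h => h.trans hij)
        fun z _ => ⟨_, le_rfl⟩
      exact ⟨k, fun _ => hk⟩
    · exact ⟨0, fun h => absurd h hf⟩

theorem exists_ball_bound (hq : QuasiTransitive T) (K : ℕ) :
    ∃ M, ∀ v, {y | T.dist v y ≤ K}.ncard ≤ M := by
  refine unif_vertex hq (fun v M => {y | T.dist v y ≤ K}.ncard ≤ M)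
    (fun x i j hij h => h.trans hij) ?_ fun x => ⟨_, le_rfl⟩
  intro g x k h
  have : {y | T.dist (g x) y ≤ K} = g '' {y | T.dist x y ≤ K} := by
    ext y
    constructor
    · intro hy
      refine ⟨g.symm y, ?_, by simp⟩
      have : T.dist (g x) (g (g.symm y)) ≤ K := by simpa using hy
      rwa [dist_iso] at this
    · rintro ⟨z, hz, rfl⟩
      simpa [dist_iso] using hz
  rw [this, Set.ncard_image_of_injective _ g.injective]
  exact h

/-- the vertices with infinitely many descendants at depth a multiple of `K` -/
abbrev X (T : SimpleGraph V) (r : V) (K : ℕ) : Type u :=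
  {v : V // (S T r v).Infinite ∧ K ∣ T.dist r v}

/-- the children of `v` -/
def Ch (T : SimpleGraph V) (r : V) (K : ℕ) (v : X T r K) : Set (X T r K) :=
  {x | x.1 ∈ S T r v.1 ∧ T.dist v.1 x.1 = K}

theorem enum {α : Type*} (s : Set α) (hs : s.Finite) (d : α) :
    ∃ c : ℕ → α, (∀ i < s.ncard, c i ∈ s) ∧
      (∀ i j, i < s.ncard → j < s.ncard → c i = c j → i = j) ∧
      ∀ x ∈ s, ∃ i < s.ncard, c i = x := by
  have := hs.to_subtype
  let e : s ≃ Fin s.ncard := Finite.equivFin s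
  refine ⟨fun i => if h : i < s.ncard then (e.symm ⟨i, h⟩).1 else d, ?_, ?_, ?_⟩
  · intro i hi
    simp only [hi, dite_true]
    exact (e.symm ⟨i, hi⟩).2
  · intro i j hi hj h
    simp only [hi, hj, dite_true] at h
    simpa using e.symm.injective (Subtype.ext h)
  · intro x hx
    refine ⟨e ⟨x, hx⟩, (e ⟨x, hx⟩).2, ?_⟩
    simp

theorem S_subset (hc : T.Connected) {a x y : V} (h : y ∈ S T a x) : S T a y ⊆ S T a x :=
  fun _ hz => (S_trans hc h hz).1

theorem two_children (hT : T.IsTree) (hl : LocallyFiniteGraph T) (r : V) (K0 : ℕ)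
    (hQ : ∀ a b, T.Adj a b → (S T a b).Infinite → Q T a b K0) (v : X T r (K0 + 1)) :
    ∃ x ∈ Ch T r (K0 + 1) v, ∃ y ∈ Ch T r (K0 + 1) v, x ≠ y := by
  have hc := hT.connected
  obtain ⟨v, hv, hdvd⟩ := v
  obtain ⟨c, hc1, hc2, hc3⟩ := infinite_child hc hl hv 1
  have hadj := SimpleGraph.dist_eq_one_iff_adj.1 hc2
  obtain ⟨e1, e2⟩ := S_root hT (r := r) hadj (by rw [mem_S.1 hc1, hc2])
  obtain ⟨x, y, hxy, hx, hy, dx, dy, ix, iy⟩ := hQ v c hadj (e1 ▸ hc3)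
  have key : ∀ x, x ∈ S T v c → T.dist c x = K0 → (S T v x).Infinite →
      ∃ h, (⟨x, h⟩ : X T r (K0 + 1)) ∈ Ch T r (K0 + 1) ⟨v, hv, hdvd⟩ := by
    intro x hx dx ix
    obtain ⟨f1, f2⟩ := S_trans hc hc1 (e1 ▸ hx : x ∈ S T r c)
    have f3 : T.dist v x = K0 + 1 := by omega
    refine ⟨⟨(e2 x hx).symm ▸ ix, ?_⟩, f1, f3⟩
    rw [mem_S.1 f1, f3]
    exact (Nat.dvd_add_self_right).2 hdvd
  obtain ⟨px, qx⟩ := key x hx dx ix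
  obtain ⟨py, qy⟩ := key y hy dy iy
  exact ⟨_, qx, _, qy, fun h => hxy (congrArg Subtype.val h)⟩

theorem anchor_inf (hT : T.IsTree) (r : V) (hr : (S T r r).Infinite) (H : ℕ)
    (hH : ∀ a b, T.Adj a b → (S T a b).Finite → ∀ y ∈ S T a b, T.dist b y ≤ H) (v : V) :
    ∃ u, (S T r u).Infinite ∧ v ∈ S T r u ∧ T.dist u v ≤ H + 1 := by
  classical
  have hc := hT.connected
  by_cases hv : (S T r v).Infinite
  · exact ⟨v, hv, self_mem_S _ _, by simp⟩
  have hex : ∃ j, ∃ z, v ∈ S T r z ∧ T.dist r z = j ∧ (S T r z).Finite :=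
    ⟨_, v, self_mem_S _ _, rfl, Set.not_infinite.1 hv⟩
  obtain ⟨z, hz1, hz2, hz3⟩ := Nat.find_spec hex
  have hmin := fun j => Nat.find_min hex (m := j)
  generalize Nat.find hex = j at *
  have hj : j ≠ 0 := by
    rintro rfl
    rw [hc.dist_eq_zero_iff] at hz2
    exact hr (hz2 ▸ hz3)
  obtain ⟨w, hw1, hw2, hw3⟩ := exists_anc hc (a := r) (x := r) (y := z) (by simp [mem_S]) (j - 1)
    (by omega)
  have hw4 := mem_S.1 hw2
  have hadj : T.Adj w z := SimpleGraph.dist_eq_one_iff_adj.1 (by omega)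
  have e1 := (S_root hT (r := r) hadj (by omega)).1
  obtain ⟨f1, f2⟩ := S_trans hc hw2 hz1
  refine ⟨w, ?_, f1, ?_⟩
  · intro hfin
    exact hmin (j - 1) (by omega) ⟨w, f1, hw3, hfin⟩
  · have := hH w z hadj (e1 ▸ hz3) v (e1 ▸ hz1)
    have := SimpleGraph.dist_eq_one_iff_adj.2 hadj
    omega

theorem anchor (hT : T.IsTree) (r : V) (hr : (S T r r).Infinite) (H K : ℕ) (hK : 0 < K)
    (hH : ∀ a b, T.Adj a b → (S T a b).Finite → ∀ y ∈ S T a b, T.dist b y ≤ H) (v : V) :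
    ∃ x : X T r K, v ∈ S T r x.1 ∧ T.dist x.1 v ≤ H + 1 + K := by
  have hc := hT.connected
  obtain ⟨w, hw1, hw2, hw3⟩ := anchor_inf hT r hr H hH v
  have hdm := Nat.div_add_mod (T.dist r w) K
  have hlt := Nat.mod_lt (T.dist r w) hK
  obtain ⟨p, hp1, hp2, hp3⟩ := exists_anc hc (a := r) (x := r) (y := w) (by simp [mem_S])
    (K * (T.dist r w / K)) (by omega)
  have hp4 := mem_S.1 hp2
  obtain ⟨f1, f2⟩ := S_trans hc hp2 hw2
  exact ⟨⟨p, hw1.mono (S_subset hc hp2), hp3 ▸ Dvd.intro _ rfl⟩, f1, by simp only; omega⟩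

theorem ce_tree (hT : T.IsTree) (hl : LocallyFiniteGraph T) (he : Infinite T.end)
    (hq : QuasiTransitive T) : CE B T := by
  have hc := hT.connected
  obtain ⟨r⟩ := hc.nonempty
  have hr : (S T r r).Infinite := by
    obtain ⟨K, C, -, hC⟩ := exists_sep3 he
    exact (hC.1 0).mono fun y _ => by simp [mem_S]
  obtain ⟨K0, hQ⟩ := exists_Q_unif hT hl he hq
  obtain ⟨H, hH⟩ := exists_height hl hq
  obtain ⟨M, hM⟩ := exists_ball_bound hq (K0 + 1)
  have h2 := two_children hT hl r K0 hQ
  have hK : 0 < K0 + 1 := Nat.succ_pos _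
  generalize K0 + 1 = K at *
  have himg : ∀ v : X T r K, Subtype.val '' Ch T r K v ⊆ {y | T.dist v.1 y ≤ K} := by
    rintro v _ ⟨x, hx, rfl⟩
    exact hx.2.le
  have hfin : ∀ v : X T r K, (Ch T r K v).Finite := fun v =>
    Set.Finite.of_finite_image ((ball_finite hc hl v.1 K).subset (himg v))
      Subtype.val_injective.injOn
  let m : X T r K → ℕ := fun v => (Ch T r K v).ncard
  have hm2 : ∀ v, 2 ≤ m v := by
    intro v
    obtain ⟨x, hx, y, hy, hxy⟩ := h2 v
    exact (Set.one_lt_ncard (hfin v)).2 ⟨x, hx, y, hy, hxy⟩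
  have hmM : ∀ v, m v ≤ M := by
    intro v
    refine le_trans ?_ (hM v.1)
    change (Ch T r K v).ncard ≤ _
    rw [← Set.ncard_image_of_injective (Ch T r K v) Subtype.val_injective]
    exact Set.ncard_le_ncard (himg v) (ball_finite hc hl v.1 K)
  choose ch hch1 hch2 hch3 using fun v => enum (Ch T r K v) (hfin v) v
  let root : X T r K := ⟨r, hr, by simp⟩
  have hstep : ∀ x i, i < m x → (ch x i).1 ∈ S T r x.1 ∧ T.dist x.1 (ch x i).1 = K :=
    fun x i hi => hch1 x i hi
  have hinj : ∀ x y i j, i < m x → j < m y → ch x i = ch y j → x = y ∧ i = j := by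
    intro x y i j hi hj h
    obtain ⟨a1, a2⟩ := hstep x i hi
    obtain ⟨b1, b2⟩ := hstep y j hj
    rw [← h] at b1 b2
    have hxy : x = y := by
      refine Subtype.ext (anc_unique hT a1 b1 ?_)
      rw [mem_S] at a1 b1
      omega
    subst hxy
    exact ⟨rfl, hch2 x i j hi hj h⟩
  let dep : X T r K → ℕ := fun x => T.dist r x.1
  have hdep : ∀ x i, i < m x → dep x < dep (ch x i) := by
    intro x i hi
    obtain ⟨a1, a2⟩ := hstep x i hi
    rw [mem_S] at a1
    simp only [dep]
    omega
  have hroot : ∀ x i, i < m x → ch x i ≠ root := by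
    intro x i hi h
    have := hdep x i hi
    rw [h] at this
    simp [dep, root] at this
  have hpar : ∀ x, x ≠ root → ∃ p i, i < m p ∧ ch p i = x := by
    intro x hx
    have hpos : 0 < T.dist r x.1 := hc.pos_dist_of_ne fun h => hx (Subtype.ext h.symm)
    have hle := Nat.le_of_dvd hpos x.2.2
    obtain ⟨p, hp1, hp2, hp3⟩ := exists_anc hc (a := r) (x := r) (y := x.1) (by simp [mem_S])
      (T.dist r x.1 - K) (by omega)
    have hp4 := mem_S.1 hp2
    have hpX : (S T r p).Infinite ∧ K ∣ T.dist r p :=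
      ⟨x.2.1.mono (S_subset hc hp2), hp3 ▸ Nat.dvd_sub x.2.2 (dvd_refl K)⟩
    obtain ⟨i, hi, h⟩ := hch3 ⟨p, hpX⟩ x ⟨hp2, by simp only; omega⟩
    exact ⟨⟨p, hpX⟩, i, hi, h⟩
  let g : List Bool → X T r K := fun w => (run root m ch w).1
  have hsurj : ∀ x, ∃ w, g w = x := fun x => by
    obtain ⟨w, hw⟩ := run_surj hm2 dep hdep hpar x 0 (hm2 x)
    exact ⟨w, by simp only [g, hw]⟩
  have chain : ∀ n w w', (g w').1 ∈ S T r (g w).1 → T.dist (g w).1 (g w').1 = K * n →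
      B.dist w w' ≤ n * (4 * M + 1) + 2 * M := by
    intro n
    induction n with
    | zero =>
      intro w w' _ h
      have : g w = g w' := Subtype.ext (hc.dist_eq_zero_iff.1 (by simpa using h))
      simpa using dist_same hm2 hmM hinj hroot dep hdep hpar w w' this
    | succ n ih =>
      intro w w' hS hd
      rw [Nat.mul_succ] at hd
      obtain ⟨y, hy1, hy2, hy3⟩ := exists_anc hc hS K (by omega)
      have hyX : (S T r y).Infinite ∧ K ∣ T.dist r y := by
        refine ⟨(g w').2.1.mono (S_subset hc hy2), ?_⟩
        rw [mem_S.1 hy1, hy3]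
        exact (Nat.dvd_add_self_right).2 (g w).2.2
      obtain ⟨i, hi, h⟩ := hch3 (g w) ⟨y, hyX⟩ ⟨hy1, hy3⟩
      obtain ⟨w1, hw1⟩ := hsurj ⟨y, hyX⟩
      have e1 := dist_child hm2 hmM hinj hroot dep hdep hpar w w1 i hi (hw1.trans h.symm)
      have f := (S_trans hc hy1 hy2).2
      have e2 := ih w1 w' (by rw [hw1]; exact hy2) (by rw [hw1]; simp only; omega)
      have t := B_conn.dist_triangle (u := w) (v := w1) (w := w')
      rw [Nat.succ_mul]
      omega
  have common : ∀ D w w' y, y ∈ S T r (g w).1 → y ∈ S T r (g w').1 → T.dist (g w).1 y ≤ D →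
      T.dist (g w').1 y ≤ D → B.dist w w' ≤ D * (4 * M + 1) + 2 * M := by
    intro D
    have main : ∀ w w' y, T.dist r (g w).1 ≤ T.dist r (g w').1 → y ∈ S T r (g w).1 →
        y ∈ S T r (g w').1 → T.dist (g w).1 y ≤ D → B.dist w w' ≤ D * (4 * M + 1) + 2 * M := by
      intro w w' y hle h h' hd
      have hS := anc_comparable hT h h' hle
      obtain ⟨n, hn⟩ : K ∣ T.dist (g w).1 (g w').1 :=
        (Nat.dvd_add_right (g w).2.2).1 (mem_S.1 hS ▸ (g w').2.2)
      have e := chain n w w' hS hn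
      have f := (S_trans hc hS h').2
      have hnD : n ≤ D := by nlinarith
      have : n * (4 * M + 1) ≤ D * (4 * M + 1) := by gcongr
      omega
    intro w w' y h h' hd hd'
    rcases le_total (T.dist r (g w).1) (T.dist r (g w').1) with hle | hle
    · exact main w w' y hle h h' hd
    · rw [SimpleGraph.dist_comm]
      exact main w' w y hle h' h hd'
  have hgstep : ∀ b w, T.dist (g w).1 (g (b :: w)).1 ≤ K := by
    intro b w
    rcases run_step (root := root) (ch := ch) hm2 b w with h | ⟨i, hi, h⟩
    · simp only [g, h]
      simp
    · simp only [g, h]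
      exact (hstep _ i hi).2.le
  have hg1 : ∀ w w', B.dist w w' ≤ 1 → T.dist (g w).1 (g w').1 ≤ K := by
    intro w w' h
    by_cases hww : w = w'
    · subst hww
      simp
    · have h1 := B_conn.pos_dist_of_ne hww
      have hadj : B.Adj w w' := SimpleGraph.dist_eq_one_iff_adj.1 (by omega)
      rcases ((SimpleGraph.fromRel_adj _ _ _).1 hadj).2 with ⟨b, rfl⟩ | ⟨b, rfl⟩
      · rw [SimpleGraph.dist_comm]
        exact hgstep b w'
      · exact hgstep b w
  let D := H + 1 + K
  refine ⟨fun w v => v ∈ S T r (g w).1 ∧ T.dist (g w).1 v ≤ D,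
    (2 * D + K) + ((D + 1) * (4 * M + 1) + 2 * M), ?_, ?_, ?_, ?_⟩
  · intro w
    exact ⟨(g w).1, self_mem_S _ _, by simp⟩
  · intro v
    obtain ⟨x, hx1, hx2⟩ := anchor hT r hr H K hK hH v
    obtain ⟨w, rfl⟩ := hsurj x
    exact ⟨w, hx1, hx2⟩
  · rintro w w' v v' ⟨-, h⟩ ⟨-, h'⟩ hd
    have e := hg1 w w' hd
    have t1 := hc.dist_triangle (u := v) (v := (g w).1) (w := v')
    have t2 := hc.dist_triangle (u := (g w).1) (v := (g w').1) (w := v')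
    rw [SimpleGraph.dist_comm (u := v) (v := (g w).1)] at t1
    omega
  · rintro w w' v v' ⟨hS, h⟩ ⟨hS', h'⟩ hd
    suffices B.dist w w' ≤ (D + 1) * (4 * M + 1) + 2 * M by omega
    by_cases hvv : v = v'
    · subst hvv
      exact common (D + 1) w w' v hS hS' (by omega) (by omega)
    · have h1 := hc.pos_dist_of_ne hvv
      have h1' : T.dist v v' = 1 := by omega
      have h1'' : T.dist v' v = 1 := by rw [SimpleGraph.dist_comm]; exact h1'
      have hadj : T.Adj v v' := SimpleGraph.dist_eq_one_iff_adj.1 h1'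
      rcases hT.dist_eq_dist_add_one_of_adj r hadj with hh | hh
      · have hv : v ∈ S T r v' := by rw [mem_S]; omega
        obtain ⟨f1, f2⟩ := S_trans hc hS' hv
        exact common (D + 1) w w' v hS f1 (by omega) (by omega)
      · have hv : v' ∈ S T r v := by rw [mem_S]; omega
        obtain ⟨f1, f2⟩ := S_trans hc hS hv
        exact common (D + 1) w w' v' f1 hS' (by omega) (by omega)

end Tree

end TQI

/-- **Lemma.** Every two locally finite trees with infinitely many ends and finitely many
orbits of vertices (under their automorphism groups) are quasi-isometric. -/
theorem trees_quasiIsometric {V W : Type u} (T1 : SimpleGraph V) (T2 : SimpleGraph W)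
    (h1 : T1.IsTree) (h2 : T2.IsTree)
    (hlf1 : LocallyFiniteGraph T1) (hlf2 : LocallyFiniteGraph T2)
    (he1 : Infinite T1.end) (he2 : Infinite T2.end)
    (hq1 : QuasiTransitive T1) (hq2 : QuasiTransitive T2) :
    QuasiIsometric T1 T2 := by
  exact TQI.CE.qi h1.connected h2.connected
    (TQI.CE.trans h1.connected TQI.B_conn h2.connected
      (TQI.ce_tree h1 hlf1 he1 hq1).symm (TQI.ce_tree h2 hlf2 he2 hq2))
end

section
/- Every locally finite tree with infinitely many ends and only finitely many orbits of vertices under its automorphism group is quasi-isometric to the 3-regular tree. -/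
open SimpleGraph

universe u v

namespace QIT

/-- The distance on the binary tree of finite words. -/
def dB : List Bool → List Bool → ℕ
  | [], v => v.length
  | _ :: u, [] => u.length + 1
  | a :: u, b :: v => if a = b then dB u v else u.length + v.length + 2

theorem dB_nil_right (u : List Bool) : dB u [] = u.length := by
  cases u <;> simp [dB]

theorem dB_self (u : List Bool) : dB u u = 0 := by
  induction u with
  | nil => simp [dB]
  | cons a u ih => simp [dB, ih]

theorem dB_comm (u v : List Bool) : dB u v = dB v u := by
  induction u generalizing v with
  | nil => simp [dB, dB_nil_right]
  | cons a u ih =>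
    cases v with
    | nil => simp [dB]
    | cons b v =>
      by_cases h : a = b
      · simp [dB, h, ih]
      · have h' : ¬ b = a := fun e => h e.symm
        simp [dB, h, h']; omega

theorem dB_le (u v : List Bool) : dB u v ≤ u.length + v.length := by
  induction u generalizing v with
  | nil => simp [dB]
  | cons a u ih =>
    cases v with
    | nil => simp [dB]
    | cons b v =>
      have := ih v
      by_cases h : a = b
      · simp [dB, h]; omega
      · simp [dB, h]; omega

theorem le_dB (u v : List Bool) : u.length ≤ dB u v + v.length := by
  induction u generalizing v with
  | nil => simp [dB]
  | cons a u ih =>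
    cases v with
    | nil => simp [dB]
    | cons b v =>
      have := ih v
      by_cases h : a = b
      · simp [dB, h]; omega
      · simp [dB, h]; omega

theorem dB_triangle (u v w : List Bool) : dB u w ≤ dB u v + dB v w := by
  induction u generalizing v w with
  | nil =>
    have := le_dB w v
    rw [dB_comm w v] at this
    simp only [dB]; omega
  | cons a u ih =>
    cases v with
    | nil =>
      have := dB_le (a :: u) w
      simpa [dB] using this
    | cons b v =>
      cases w with
      | nil =>
        have := le_dB (a :: u) (b :: v)
        simpa [dB_nil_right] using this
      | cons c w =>
        have h1 := ih v w
        have h2 := le_dB u v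
        have h3 := le_dB w v
        rw [dB_comm w v] at h3
        have h4 := dB_le u w
        simp only [dB]
        split_ifs <;> first | omega | (subst_vars; simp_all)

theorem dB_append (p u v : List Bool) : dB (p ++ u) (p ++ v) = dB u v := by
  induction p with
  | nil => rfl
  | cons a p ih => simp [dB, ih]

theorem dB_append_self (p u : List Bool) : dB p (p ++ u) = u.length := by
  have := dB_append p [] u
  simpa [dB] using this

/-- The codeword of the `i`-th of `n` children. -/
def cw (n i : ℕ) : List Bool := List.replicate i true ++ if i + 1 = n then [] else [false]

theorem cw_length (n i : ℕ) (h : i < n) : (cw n i).length ≤ n := by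
  unfold cw; split_ifs <;> simp <;> omega

theorem cw_pos (n i : ℕ) (h : 2 ≤ n) : 1 ≤ (cw n i).length := by
  unfold cw; split_ifs <;> simp; omega

theorem cw_sep_aux (n i j : ℕ) (hj : j < n) (hij : i < j) (s t : List Bool) :
    (cw n i ++ s).length + (cw n j ++ t).length ≤ dB (cw n i ++ s) (cw n j ++ t) + 2 * n := by
  obtain ⟨m, rfl⟩ := Nat.exists_eq_add_of_lt hij
  have h1 : cw n i ++ s = List.replicate i true ++ (false :: s) := by
    unfold cw; rw [if_neg (by omega)]; simp
  have h2 : ∃ t', cw n (i + m + 1) ++ t = List.replicate i true ++ (true :: t') := by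
    refine ⟨List.replicate m true ++ ((if i + m + 1 + 1 = n then [] else [false]) ++ t), ?_⟩
    have : i + m + 1 = i + (1 + m) := by omega
    unfold cw
    rw [this, List.replicate_add, List.replicate_add]
    simp
  obtain ⟨t', h2⟩ := h2
  rw [h1, h2, dB_append]
  simp [dB]; omega

theorem cw_sep (n i j : ℕ) (hi : i < n) (hj : j < n) (hij : i ≠ j) (s t : List Bool) :
    (cw n i ++ s).length + (cw n j ++ t).length ≤ dB (cw n i ++ s) (cw n j ++ t) + 2 * n := by
  rcases lt_or_gt_of_ne hij with h | h
  · exact cw_sep_aux n i j hj h s t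
  · have := cw_sep_aux n j i hi h t s
    rw [dB_comm]; omega

/-- Completeness of the code: each word is short or extends a codeword. -/
theorem cw_complete (n : ℕ) (hn : 1 ≤ n) (w : List Bool) :
    w.length ≤ n ∨ ∃ i < n, ∃ w', w = cw n i ++ w' := by
  induction n, hn using Nat.le_induction generalizing w with
  | base => right; exact ⟨0, by simp, w, by simp [cw]⟩
  | succ n hn ih =>
    cases w with
    | nil => left; simp
    | cons a w =>
      cases a with
      | false =>
        right; refine ⟨0, by omega, w, ?_⟩
        unfold cw; rw [if_neg (by omega)]; simp
      | true =>
        rcases ih w with h | ⟨i, hi, w', rfl⟩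
        · left; simp; omega
        · right; refine ⟨i + 1, by omega, w', ?_⟩
          simp [cw, List.replicate_succ]

/-- A tree rooted at `r`, with parent function `p` and height function `h`. -/
structure IsRooted {V : Type*} (T : SimpleGraph V) (r : V) (p : V → V) (h : V → ℕ) : Prop where
  h_root : h r = 0
  p_root : p r = r
  eq_root : ∀ v, h v = 0 → v = r
  adj : ∀ v, v ≠ r → T.Adj v (p v)
  h_p : ∀ v, v ≠ r → h v = h (p v) + 1
  nbr : ∀ u v, T.Adj u v → (u ≠ r ∧ p u = v) ∨ (v ≠ r ∧ p v = u)

theorem exists_rooted {V : Type*} (T : SimpleGraph V) (hT : T.IsTree) (r : V) :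
    ∃ p h, IsRooted T r p h := by
  classical
  have ex : ∀ v, v ≠ r → ∃ u, T.Adj v u ∧ T.dist r v = T.dist r u + 1 := by
    intro v hv
    obtain ⟨w, hw⟩ := hT.connected.exists_walk_length_eq_dist v r
    cases w with
    | nil => exact absurd rfl hv
    | cons hadj q =>
      rename_i u
      refine ⟨u, hadj, ?_⟩
      have h1 := T.dist_le q
      have h2 := hT.dist_eq_dist_add_one_of_adj r hadj
      rw [SimpleGraph.Walk.length_cons] at hw
      rw [T.dist_comm (u := v)] at hw
      rw [T.dist_comm (u := u)] at h1
      omega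
  have uq : ∀ v u u', T.Adj v u → T.Adj v u' → T.dist r v = T.dist r u + 1 →
      T.dist r v = T.dist r u' + 1 → u = u' := by
    intro v u u' hu hu' du du'
    obtain ⟨q, hq⟩ := hT.connected.exists_walk_length_eq_dist u r
    obtain ⟨q', hq'⟩ := hT.connected.exists_walk_length_eq_dist u' r
    have e1 : (SimpleGraph.Walk.cons hu q).IsPath := by
      apply SimpleGraph.Walk.isPath_of_length_eq_dist
      rw [SimpleGraph.Walk.length_cons, hq, T.dist_comm, T.dist_comm (u := v), du]
    have e2 : (SimpleGraph.Walk.cons hu' q').IsPath := by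
      apply SimpleGraph.Walk.isPath_of_length_eq_dist
      rw [SimpleGraph.Walk.length_cons, hq', T.dist_comm, T.dist_comm (u := v), du']
    have := (hT.existsUnique_path v r).unique e1 e2
    simp only [SimpleGraph.Walk.cons.injEq] at this
    exact this.1
  choose! p hp1 hp2 using ex
  refine ⟨fun v => if v = r then r else p v, fun v => T.dist r v, ?_, ?_, ?_, ?_, ?_, ?_⟩
  · simp
  · simp
  · intro v hv
    exact ((hT.connected.dist_eq_zero_iff).1 hv).symm
  · intro v hv; simpa [hv] using hp1 v hv
  · intro v hv; simpa [hv] using hp2 v hv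
  · intro u v huv
    rcases hT.dist_eq_dist_add_one_of_adj r huv with h | h
    · left
      have : u ≠ r := by rintro rfl; simp at h
      refine ⟨this, ?_⟩
      simp only [this, if_false]
      exact uq u _ _ (hp1 u this) huv (hp2 u this) h
    · right
      have : v ≠ r := by rintro rfl; simp at h
      refine ⟨this, ?_⟩
      simp only [this, if_false]
      exact uq v _ _ (hp1 v this) huv.symm (hp2 v this) h

namespace IsRooted

variable {V : Type*} {T : SimpleGraph V} {r : V} {p : V → V} {h : V → ℕ}

theorem h_iter (H : IsRooted T r p h) (i : ℕ) (v : V) : h (p^[i] v) = h v - i := by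
  induction i generalizing v with
  | zero => rfl
  | succ i ih =>
    rw [Function.iterate_succ_apply, ih]
    by_cases hv : v = r
    · subst hv; rw [H.p_root, H.h_root]; omega
    · have := H.h_p v hv; omega

theorem ne_root (H : IsRooted T r p h) {v : V} (hv : 0 < h v) : v ≠ r := by
  rintro rfl; rw [H.h_root] at hv; omega

theorem h_pos (H : IsRooted T r p h) {v : V} (hv : v ≠ r) : 0 < h v := by
  have := H.h_p v hv; omega

theorem iter_h (H : IsRooted T r p h) (v : V) : p^[h v] v = r :=
  H.eq_root _ (by rw [H.h_iter]; omega)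

theorem meet (H : IsRooted T r p h) (u v : V) : ∃ i j, i ≤ h u ∧ j ≤ h v ∧ p^[i] u = p^[j] v ∧
    (i = 0 ∨ j = 0 ∨ p^[i - 1] u ≠ p^[j - 1] v) := by
  classical
  have ex : ∃ i, i ≤ h u ∧ ∃ j ≤ h v, p^[i] u = p^[j] v :=
    ⟨h u, le_rfl, h v, le_rfl, by rw [H.iter_h, H.iter_h]⟩
  obtain ⟨hi, j, hj, e⟩ := Nat.find_spec ex
  refine ⟨Nat.find ex, j, hi, hj, e, ?_⟩
  by_cases h0 : Nat.find ex = 0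
  · exact Or.inl h0
  · right; right
    intro e'
    exact Nat.find_min ex (m := Nat.find ex - 1) (by omega) ⟨by omega, j - 1, by omega, e'⟩

theorem dist_iter (H : IsRooted T r p h) (hc : T.Connected) (i : ℕ) (v : V) :
    T.dist v (p^[i] v) ≤ i := by
  induction i generalizing v with
  | zero => simp
  | succ i ih =>
    rw [Function.iterate_succ_apply]
    by_cases hv : v = r
    · subst hv
      rw [H.p_root]; exact (ih v).trans (by omega)
    · have h1 := hc.dist_triangle (u := v) (v := p v) (w := p^[i] (p v))
      have h2 := SimpleGraph.dist_eq_one_iff_adj.2 (H.adj v hv)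
      have := ih (p v)
      omega

end IsRooted

/-- The children of `v` lying in `I`. -/
def ch {V : Type*} (r : V) (p : V → V) (I : Set V) (v : V) : Set V :=
  {c | c ≠ r ∧ p c = v ∧ c ∈ I}

/-- Uniform branching of the subtree `I`, which is coarsely dense. -/
structure Good {V : Type*} (r : V) (p : V → V) (h : V → ℕ) (I : Set V) (D k : ℕ) : Prop where
  root_mem : r ∈ I
  p_mem : ∀ v ∈ I, p v ∈ I
  fin : ∀ v, (ch r p I v).Finite
  card_pos : ∀ v ∈ I, 1 ≤ (ch r p I v).ncard
  card_le : ∀ v, (ch r p I v).ncard ≤ D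
  branch : ∀ v ∈ I, k ≤ h v → ∃ i < k, 2 ≤ (ch r p I (p^[i + 1] v)).ncard
  near : ∀ v, ∃ i ≤ k, p^[i] v ∈ I

/-- Unfolding a labelling of the vertices along the path from the root. -/
def unfoldCode {V : Type*} (p : V → V) (code : V → List Bool) : ℕ → V → List Bool
  | 0, _ => []
  | n + 1, v => unfoldCode p code n (p v) ++ code v

theorem exists_index {V : Type*} (S : Set V) (hS : S.Finite) :
    ∃ φ : V → ℕ, Set.BijOn φ S (Set.Iio S.ncard) := by
  classical
  have := hS.to_subtype
  let e := Finite.equivFin S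
  have hc : Nat.card S = S.ncard := rfl
  refine ⟨fun x => if hx : x ∈ S then (e ⟨x, hx⟩ : ℕ) else 0, ?_, ?_, ?_⟩
  · intro x hx
    simp only [hx, dif_pos, Set.mem_Iio]
    exact (e ⟨x, hx⟩).2
  · intro x hx y hy hxy
    simp only [hx, hy, dif_pos] at hxy
    have := e.injective (Fin.ext hxy)
    simpa using this
  · intro i hi
    have hi' : i < Nat.card S := hi
    refine ⟨(e.symm ⟨i, hi'⟩ : S), (e.symm ⟨i, hi'⟩).2, ?_⟩
    simp only [Subtype.coe_prop, dif_pos, Subtype.coe_eta, Equiv.apply_symm_apply]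

theorem core {V : Type*} {T : SimpleGraph V} {r : V} {p : V → V} {h : V → ℕ}
    (hc : T.Connected) (H : IsRooted T r p h) {I : Set V} {D k : ℕ} (G : Good r p h I D k) :
    ∃ (f : V → List Bool) (C : ℕ), (∀ u v, dB (f u) (f v) ≤ C * T.dist u v) ∧
      (∀ u v, T.dist u v ≤ C * dB (f u) (f v) + C) ∧ ∀ w, ∃ v, dB (f v) w ≤ C := by
  classical
  choose φ hφ using fun v => exists_index (ch r p I v) (G.fin v)
  let N : V → ℕ := fun v => (ch r p I v).ncard
  have hN : ∀ v, N v ≤ D := G.card_le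
  let code : V → List Bool := fun c => if c ≠ r ∧ c ∈ I then cw (N (p c)) (φ (p c) c) else []
  let f : V → List Bool := fun v => unfoldCode p code (h v) v
  have f_step : ∀ v, v ≠ r → f v = f (p v) ++ code v := by
    intro v hv
    simp only [f, H.h_p v hv, unfoldCode]
  have hidx : ∀ c, c ≠ r → c ∈ I → φ (p c) c < N (p c) := fun c h1 h2 =>
    (hφ (p c)).mapsTo ⟨h1, rfl, h2⟩
  have code_I : ∀ c, c ≠ r → c ∈ I → code c = cw (N (p c)) (φ (p c) c) := by
    intro c h1 h2; simp only [code]; rw [if_pos ⟨h1, h2⟩]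
  have code_not : ∀ c, c ∉ I → code c = [] := by
    intro c h2; simp only [code]; rw [if_neg (fun h => h2 h.2)]
  have code_len : ∀ c, (code c).length ≤ D := by
    intro c
    by_cases hcc : c ≠ r ∧ c ∈ I
    · rw [code_I c hcc.1 hcc.2]
      exact (cw_length _ _ (hidx c hcc.1 hcc.2)).trans (hN _)
    · simp only [code]; rw [if_neg hcc]; simp
  have I_iter : ∀ i v, v ∈ I → p^[i] v ∈ I := by
    intro i
    induction i with
    | zero => intro v hv; exact hv
    | succ i ih => intro v hv; rw [Function.iterate_succ_apply]; exact ih _ (G.p_mem v hv)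
  have f_pre : ∀ i v, ∃ s, f v = f (p^[i] v) ++ s := by
    intro i
    induction i with
    | zero => intro v; exact ⟨[], by simp⟩
    | succ i ih =>
      intro v
      rw [Function.iterate_succ_apply]
      by_cases hv : v = r
      · subst hv; rw [H.p_root]; exact ih v
      · obtain ⟨s, hs⟩ := ih (p v)
        exact ⟨s ++ code v, by rw [f_step v hv, hs]; simp⟩
  have f_len : ∀ i v, (f (p^[i] v)).length ≤ (f v).length := by
    intro i v
    obtain ⟨s, hs⟩ := f_pre i v
    rw [hs]; simp
  -- Lipschitz bound
  have f_adj : ∀ u v, T.Adj u v → dB (f u) (f v) ≤ D := by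
    intro u v huv
    rcases H.nbr u v huv with ⟨h1, rfl⟩ | ⟨h1, rfl⟩
    · rw [f_step u h1, dB_comm, dB_append_self]; exact code_len _
    · rw [f_step v h1, dB_append_self]; exact code_len _
  have f_walk : ∀ u v (w : T.Walk u v), dB (f u) (f v) ≤ D * w.length := by
    intro u v w
    induction w with
    | nil => simp [dB_self]
    | cons hadj q ih =>
      rename_i a b c
      have h1 := dB_triangle (f a) (f b) (f c)
      have h2 := f_adj a b hadj
      rw [SimpleGraph.Walk.length_cons, mul_add]
      omega
  -- positivity of lengths at branchings
  have code_branch : ∀ c, c ≠ r → c ∈ I → 2 ≤ N (p c) → 1 ≤ (code c).length := by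
    intro c h1 h2 h3
    rw [code_I c h1 h2]; exact cw_pos _ _ h3
  have grow_k : ∀ v ∈ I, k ≤ h v → (f (p^[k] v)).length + 1 ≤ (f v).length := by
    intro v hv hk
    obtain ⟨i, hi, hb⟩ := G.branch v hv hk
    have hne : p^[i] v ≠ r := H.ne_root (by rw [H.h_iter]; omega)
    rw [Function.iterate_succ_apply'] at hb
    have h1 := code_branch _ hne (I_iter i v hv) hb
    have h2 := f_step _ hne
    have h3 := f_len i v
    have h4 := f_len (k - (i + 1)) (p^[i+1] v)
    rw [← Function.iterate_add_apply, show k - (i + 1) + (i + 1) = k by omega] at h4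
    rw [h2] at h3
    rw [Function.iterate_succ_apply'] at h4
    simp only [List.length_append] at h3
    omega
  have k_pos : 1 ≤ k := by
    by_contra hk
    obtain ⟨i, hi, _⟩ := G.branch r G.root_mem (by omega)
    omega
  have grow : ∀ i, ∀ v ∈ I, i ≤ h v → i + k * (f (p^[i] v)).length ≤ k * (f v).length + k := by
    intro i
    induction i using Nat.strong_induction_on with
    | _ i ih =>
      intro v hv hi
      by_cases hik : i < k
      · have := Nat.mul_le_mul_left k (f_len i v)
        omega
      · have h1 := grow_k v hv (by omega)
        have h2 := ih (i - k) (by omega) (p^[k] v) (I_iter k v hv) (by rw [H.h_iter]; omega)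
        rw [← Function.iterate_add_apply, show i - k + k = i by omega] at h2
        have h3 := Nat.mul_le_mul_left k h1
        rw [mul_add] at h3
        omega
  -- lower bound inside `I`
  have low_I : ∀ u ∈ I, ∀ v ∈ I, T.dist u v ≤ k * dB (f u) (f v) + 2 * k + k * (2 * D) := by
    intro u hu v hv
    obtain ⟨i, j, hi, hj, e, hm⟩ := H.meet u v
    have d1 := H.dist_iter hc i u
    have d2 := H.dist_iter hc j v
    have d3 := hc.dist_triangle (u := u) (v := p^[j] v) (w := v)
    rw [T.dist_comm (u := p^[j] v)] at d3
    rw [e] at d1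
    have g1 := grow i u hu hi
    have g2 := grow j v hv hj
    rw [e] at g1
    have key : (f u).length + (f v).length ≤ dB (f u) (f v) + 2 * D + 2 * (f (p^[j] v)).length := by
      by_cases hi0 : i = 0
      · subst hi0
        have e' : u = p^[j] v := e
        rw [← e']
        have := le_dB (f v) (f u)
        rw [dB_comm] at this
        omega
      by_cases hj0 : j = 0
      · subst hj0
        have := le_dB (f u) (f v)
        simp only [Function.iterate_zero, id]
        omega
      have hne : p^[i - 1] u ≠ p^[j - 1] v := by tauto
      have ha : p^[i - 1] u ≠ r := H.ne_root (by rw [H.h_iter]; omega)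
      have hb : p^[j - 1] v ≠ r := H.ne_root (by rw [H.h_iter]; omega)
      have haI := I_iter (i - 1) u hu
      have hbI := I_iter (j - 1) v hv
      have pa : p (p^[i - 1] u) = p^[j] v := by
        rw [← Function.iterate_succ_apply' p, show (i - 1).succ = i by omega, e]
      have pb : p (p^[j - 1] v) = p^[j] v := by
        rw [← Function.iterate_succ_apply' p, show (j - 1).succ = j by omega]
      obtain ⟨s, hs⟩ := f_pre (i - 1) u
      obtain ⟨t, ht⟩ := f_pre (j - 1) v
      have ca := hidx _ ha haI
      have cb := hidx _ hb hbI
      rw [f_step _ ha, code_I _ ha haI, pa] at hs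
      rw [f_step _ hb, code_I _ hb hbI, pb] at ht
      rw [pa] at ca
      rw [pb] at cb
      have hij : φ (p^[j] v) (p^[i - 1] u) ≠ φ (p^[j] v) (p^[j - 1] v) := fun hh =>
        hne ((hφ (p^[j] v)).injOn ⟨ha, pa, haI⟩ ⟨hb, pb, hbI⟩ hh)
      have := cw_sep _ _ _ ca cb hij s t
      have hD := hN (p^[j] v)
      rw [hs, ht, List.append_assoc, List.append_assoc, dB_append,
        List.length_append (as := f _), List.length_append (as := f _)]
      omega
    have key2 := Nat.mul_le_mul_left k key
    simp only [mul_add] at key2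
    have : k * (2 * (f (p^[j] v)).length) = 2 * (k * (f (p^[j] v)).length) := by ring
    omega
  have f_near : ∀ v, ∃ u ∈ I, T.dist v u ≤ k ∧ f v = f u := by
    intro v
    have ex := G.near v
    obtain ⟨h1, h2⟩ := Nat.find_spec ex
    refine ⟨_, h2, (H.dist_iter hc _ v).trans h1, ?_⟩
    have : ∀ i, i ≤ Nat.find ex → f v = f (p^[i] v) := by
      intro i
      induction i with
      | zero => intro _; rfl
      | succ i ih =>
        intro hi
        have h3 : p^[i] v ∉ I := fun hh => Nat.find_min ex (m := i) (by omega) ⟨by omega, hh⟩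
        have h4 : p^[i] v ≠ r := fun hh => h3 (hh ▸ G.root_mem)
        rw [ih (by omega), f_step _ h4, code_not _ h3, Function.iterate_succ_apply']
        simp
    exact this _ le_rfl
  have low : ∀ u v, T.dist u v ≤ k * dB (f u) (f v) + 4 * k + k * (2 * D) := by
    intro u v
    obtain ⟨u', hu', du, fu⟩ := f_near u
    obtain ⟨v', hv', dv, fv⟩ := f_near v
    have := low_I u' hu' v' hv'
    rw [fu, fv]
    have t1 := hc.dist_triangle (u := u) (v := u') (w := v)
    have t2 := hc.dist_triangle (u := u') (v := v') (w := v)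
    rw [T.dist_comm (u := v')] at t2
    omega
  -- coarse surjectivity
  have ex_child : ∀ v ∈ I, ∀ i < N v, ∃ c ∈ I, c ≠ r ∧ p c = v ∧ f c = f v ++ cw (N v) i := by
    intro v hv i hi
    obtain ⟨c, ⟨h1, h2, h3⟩, h4⟩ := (hφ v).surjOn hi
    refine ⟨c, h3, h1, h2, ?_⟩
    rw [f_step c h1, code_I c h1 h3, h2, h4]
  have ex_branch : ∀ v ∈ I, ∃ b ∈ I, f b = f v ∧ 2 ≤ N b := by
    intro v hv
    by_contra! hno
    have desc : ∀ m, ∃ u ∈ I, m ≤ h u ∧ ∀ i ≤ m, f (p^[i] u) = f v := by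
      intro m
      induction m with
      | zero => exact ⟨v, hv, by omega, fun i hi => by simp [Nat.le_zero.1 hi]⟩
      | succ m ih =>
        obtain ⟨u, hu, hmu, hf⟩ := ih
        have h1 := hno u hu (hf 0 (by omega))
        have h2 := G.card_pos u hu
        have hN1 : N u = 1 := by
          have : 1 ≤ N u := h2
          omega
        obtain ⟨c, hcI, hcr, hpc, hfc⟩ := ex_child u hu 0 (by omega)
        refine ⟨c, hcI, ?_, ?_⟩
        · have := H.h_p c hcr
          rw [hpc] at this; omega
        · intro i hi
          cases i with
          | zero =>
            have := hf 0 (by omega)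
            simp only [Function.iterate_zero, id] at this ⊢
            rw [hfc, hN1, this]; simp [cw]
          | succ i =>
            rw [Function.iterate_succ_apply, hpc]
            exact hf i (by omega)
    obtain ⟨u, hu, hku, hf⟩ := desc k
    obtain ⟨i, hi, hb⟩ := G.branch u hu hku
    have := hno _ (I_iter (i + 1) u hu) (hf _ (by omega))
    have hb' : 2 ≤ N (p^[i + 1] u) := hb
    omega
  have surj : ∀ n, ∀ v ∈ I, ∀ w : List Bool, w.length ≤ n → ∃ v', dB (f v') (f v ++ w) ≤ D := by
    intro n
    induction n with
    | zero =>
      intro v hv w hw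
      exact ⟨v, by rw [dB_append_self]; omega⟩
    | succ n ih =>
      intro v hv w hw
      obtain ⟨b, hb, hfb, hb2⟩ := ex_branch v hv
      rcases cw_complete (N b) (by omega) w with hl | ⟨i, hi, w', rfl⟩
      · refine ⟨b, ?_⟩
        rw [← hfb, dB_append_self]
        exact hl.trans (hN b)
      · obtain ⟨c, hcI, hcr, hpc, hfc⟩ := ex_child b hb i hi
        have hp := cw_pos (N b) i hb2
        rw [List.length_append] at hw
        obtain ⟨v', hv'⟩ := ih c hcI w' (by omega)
        refine ⟨v', ?_⟩
        rw [← hfb, ← List.append_assoc, ← hfc]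
        exact hv'
  refine ⟨f, D + 4 * k + k * (2 * D), ?_, ?_, ?_⟩
  · intro u v
    obtain ⟨w, hw⟩ := hc.exists_walk_length_eq_dist u v
    have := f_walk u v w
    rw [hw] at this
    refine this.trans (Nat.mul_le_mul_right _ (by omega))
  · intro u v
    have h1 := low u v
    have h2 : k * dB (f u) (f v) ≤ (D + 4 * k + k * (2 * D)) * dB (f u) (f v) :=
      Nat.mul_le_mul_right _ (by omega)
    omega
  · intro w
    obtain ⟨v, hv⟩ := surj w.length r G.root_mem w le_rfl
    have hfr : f r = [] := by simp only [f, H.h_root, unfoldCode]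
    rw [hfr] at hv
    exact ⟨v, by simp only [List.nil_append] at hv; omega⟩

/-- The vertices reachable from `a` without passing through `b`. -/
def Half {V : Type*} (T : SimpleGraph V) (a b : V) : Set V :=
  {x | Relation.ReflTransGen (fun x y => T.Adj x y ∧ y ≠ b) a x}

/-- `b` has three neighbours behind which the tree is infinite. -/
def Triple {V : Type*} (T : SimpleGraph V) (b : V) : Prop :=
  ∃ a₁ a₂ a₃, a₁ ≠ a₂ ∧ a₁ ≠ a₃ ∧ a₂ ≠ a₃ ∧ T.Adj a₁ b ∧ T.Adj a₂ b ∧ T.Adj a₃ b ∧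
    (Half T a₁ b).Infinite ∧ (Half T a₂ b).Infinite ∧ (Half T a₃ b).Infinite

theorem half_map {V : Type*} {T : SimpleGraph V} (g : T ≃g T) {a b x : V} (hx : x ∈ Half T a b) :
    g x ∈ Half T (g a) (g b) := by
  refine Relation.ReflTransGen.lift g ?_ _ _ hx
  rintro y z ⟨h1, h2⟩
  exact ⟨g.map_adj_iff.2 h1, fun e => h2 (g.injective e)⟩

theorem half_map_infinite {V : Type*} {T : SimpleGraph V} (g : T ≃g T) {a b : V}
    (hx : (Half T a b).Infinite) : (Half T (g a) (g b)).Infinite := by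
  refine (hx.image g.injective.injOn).mono ?_
  rintro _ ⟨x, hx, rfl⟩
  exact half_map g hx

theorem triple_map {V : Type*} {T : SimpleGraph V} (g : T ≃g T) {b : V} (hb : Triple T b) :
    Triple T (g b) := by
  obtain ⟨a₁, a₂, a₃, h1, h2, h3, h4, h5, h6, h7, h8, h9⟩ := hb
  exact ⟨g a₁, g a₂, g a₃, g.injective.ne h1, g.injective.ne h2, g.injective.ne h3,
    g.map_adj_iff.2 h4, g.map_adj_iff.2 h5, g.map_adj_iff.2 h6,
    half_map_infinite g h7, half_map_infinite g h8, half_map_infinite g h9⟩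

theorem dist_map_le {V : Type*} {T : SimpleGraph V} (hc : T.Connected) (g : T ≃g T) (a b : V) :
    T.dist (g a) (g b) ≤ T.dist a b := by
  obtain ⟨w, hw⟩ := hc.exists_walk_length_eq_dist a b
  rw [← hw]
  have := T.dist_le (w.map g.toHom)
  rw [SimpleGraph.Walk.length_map] at this
  exact this

theorem uniform_half {V : Type*} {T : SimpleGraph V} (hc : T.Connected)
    (hlf : ∀ v : V, (T.neighborSet v).Finite)
    (hq : ∃ s : Set V, s.Finite ∧ ∀ v : V, ∃ u ∈ s, ∃ g : T ≃g T, g u = v) :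
    ∃ N : ℕ, ∀ a b, T.Adj a b → (Half T a b).Finite → ∀ x ∈ Half T a b, T.dist a x ≤ N := by
  obtain ⟨s, hs, hq⟩ := hq
  have h1 : ∀ q : V × V, ∃ n : ℕ, (Half T q.1 q.2).Finite → ∀ x ∈ Half T q.1 q.2,
      T.dist q.1 x ≤ n := by
    intro q
    by_cases hf : (Half T q.1 q.2).Finite
    · obtain ⟨n, hn⟩ := (hf.image (fun x => T.dist q.1 x)).bddAbove
      exact ⟨n, fun _ x hx => hn ⟨x, hx, rfl⟩⟩
    · exact ⟨0, fun h => absurd h hf⟩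
  choose n hn using h1
  have hP : (⋃ b ∈ s, (fun a => (a, b)) '' T.neighborSet b).Finite :=
    hs.biUnion fun b _ => (hlf b).image _
  obtain ⟨N, hN⟩ := (hP.image n).bddAbove
  refine ⟨N, fun a b hab hf x hx => ?_⟩
  obtain ⟨u, hu, g, rfl⟩ := hq b
  obtain ⟨a, rfl⟩ := g.surjective a
  obtain ⟨x, rfl⟩ := g.surjective x
  have hab' : T.Adj a u := g.map_adj_iff.1 hab
  have hf' : (Half T a u).Finite := by
    by_contra hinf
    exact half_map_infinite g hinf hf
  have hx' : x ∈ Half T a u := by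
    have := half_map g.symm hx
    simpa using this
  have h3 := hn (a, u) hf' x hx'
  have h4 : n (a, u) ≤ N := hN ⟨(a, u), by
    simp only [Set.mem_iUnion]
    exact ⟨u, hu, a, hab'.symm, rfl⟩, rfl⟩
  exact (dist_map_le hc g a x).trans (h3.trans h4)

theorem uniform_degree {V : Type*} {T : SimpleGraph V}
    (hq : ∃ s : Set V, s.Finite ∧ ∀ v : V, ∃ u ∈ s, ∃ g : T ≃g T, g u = v) :
    ∃ N : ℕ, ∀ a, (T.neighborSet a).ncard ≤ N := by
  obtain ⟨s, hs, hq⟩ := hq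
  obtain ⟨N, hN⟩ := (hs.image (fun v => (T.neighborSet v).ncard)).bddAbove
  refine ⟨N, fun a => ?_⟩
  obtain ⟨u, hu, g, rfl⟩ := hq a
  have : T.neighborSet (g u) = g '' T.neighborSet u := by
    ext x
    obtain ⟨x, rfl⟩ := g.surjective x
    rw [g.injective.mem_set_image]
    exact g.map_adj_iff
  rw [this, Set.ncard_image_of_injective _ g.injective]
  exact hN ⟨u, hu, rfl⟩

theorem uniform_triple {V : Type*} {T : SimpleGraph V} (hc : T.Connected)
    (hq : ∃ s : Set V, s.Finite ∧ ∀ v : V, ∃ u ∈ s, ∃ g : T ≃g T, g u = v)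
    (t : V) (ht : Triple T t) :
    ∃ N : ℕ, ∀ a, ∃ b, Triple T b ∧ T.dist a b ≤ N := by
  obtain ⟨s, hs, hq⟩ := hq
  obtain ⟨N, hN⟩ := (hs.image (fun v => T.dist v t)).bddAbove
  refine ⟨N, fun a => ?_⟩
  obtain ⟨u, hu, g, rfl⟩ := hq a
  exact ⟨g t, triple_map g ht, (dist_map_le hc g u t).trans (hN ⟨u, hu, rfl⟩)⟩

/-- The descendants of `v`. -/
def cone {V : Type*} (p : V → V) (v : V) : Set V := {x | ∃ i, p^[i] x = v}

namespace IsRooted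

variable {V : Type*} {T : SimpleGraph V} {r : V} {p : V → V} {h : V → ℕ}

theorem h_lip (H : IsRooted T r p h) (hc : T.Connected) (u v : V) : h v ≤ h u + T.dist u v := by
  obtain ⟨w, hw⟩ := hc.exists_walk_length_eq_dist u v
  rw [← hw]
  clear hw
  induction w with
  | nil => simp
  | cons hadj q ih =>
    rename_i a b c
    rw [SimpleGraph.Walk.length_cons]
    rcases H.nbr a b hadj with ⟨h1, h2⟩ | ⟨h1, h2⟩
    · have := H.h_p a h1
      rw [h2] at this; omega
    · have := H.h_p b h1
      rw [h2] at this; omega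

theorem cone_h (H : IsRooted T r p h) {v x : V} (hx : x ∈ cone p v) : h v ≤ h x := by
  obtain ⟨i, rfl⟩ := hx
  rw [H.h_iter]; omega

theorem half_sub_cone (H : IsRooted T r p h) (v : V) : Half T v (p v) ⊆ cone p v := by
  intro x hx
  induction hx with
  | refl => exact ⟨0, rfl⟩
  | @tail y z _ hst ih =>
    obtain ⟨i, hi⟩ := ih
    rcases H.nbr y z hst.1 with ⟨h1, h2⟩ | ⟨h1, h2⟩
    · cases i with
      | zero =>
        have e : y = v := hi
        subst e
        exact absurd h2.symm hst.2
      | succ i => exact ⟨i, by rw [← h2, ← Function.iterate_succ_apply, hi]⟩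
    · exact ⟨i + 1, by rw [Function.iterate_succ_apply, h2, hi]⟩

theorem cone_sub_half (H : IsRooted T r p h) (v : V) (hv : v ≠ r) : cone p v ⊆ Half T v (p v) := by
  rintro x ⟨i, hi⟩
  induction i generalizing x with
  | zero =>
    have e : x = v := hi
    subst e
    exact Relation.ReflTransGen.refl
  | succ i ih =>
    rw [Function.iterate_succ_apply] at hi
    by_cases hx : x = r
    · subst hx
      rw [H.p_root] at hi
      exact ih hi
    · refine Relation.ReflTransGen.tail (ih hi) ⟨(H.adj x hx).symm, ?_⟩
      intro e
      have h1 := H.cone_h ⟨i + 1, by rw [Function.iterate_succ_apply, hi]⟩ (x := x) (v := v)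
      have h2 := H.h_p v hv
      rw [e] at h1; omega

/-- Vertices which are not below `v` are behind the parent of `v`. -/
theorem compl_cone_sub_half (H : IsRooted T r p h) (v : V) (hv : v ≠ r) :
    (cone p v)ᶜ ⊆ Half T (p v) v := by
  -- from the parent up to the root
  have up : ∀ i, p^[i] (p v) ∈ Half T (p v) v := by
    intro i
    induction i with
    | zero => exact Relation.ReflTransGen.refl
    | succ i ih =>
      rw [Function.iterate_succ_apply']
      by_cases hx : p^[i] (p v) = r
      · rw [hx, H.p_root, ← hx]; exact ih
      · refine Relation.ReflTransGen.tail ih ⟨H.adj _ hx, ?_⟩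
        intro e
        have h1 := H.h_iter (i + 1) (p v)
        rw [Function.iterate_succ_apply', e] at h1
        have h2 := H.h_p v hv
        omega
  have hr : r ∈ Half T (p v) v := by
    have := up (h (p v))
    rwa [H.iter_h] at this
  -- down from the root
  have down : ∀ n x, h x = n → x ∉ cone p v → x ∈ Half T (p v) v := by
    intro n
    induction n with
    | zero => intro x hx _; rw [H.eq_root x hx]; exact hr
    | succ n ih =>
      intro x hx hxv
      have hxr : x ≠ r := H.ne_root (by omega)
      have h1 := H.h_p x hxr
      refine Relation.ReflTransGen.tail (ih (p x) (by omega) ?_) ⟨(H.adj x hxr).symm, ?_⟩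
      · rintro ⟨i, hi⟩
        exact hxv ⟨i + 1, by rw [Function.iterate_succ_apply, hi]⟩
      · rintro rfl
        exact hxv ⟨0, rfl⟩
  intro x hx
  exact down _ x rfl hx

theorem cone_disjoint (H : IsRooted T r p h) {u v x : V} (huv : h u = h v) (hu : x ∈ cone p u)
    (hv : x ∈ cone p v) : u = v := by
  obtain ⟨i, rfl⟩ := hu
  obtain ⟨j, rfl⟩ := hv
  rw [H.h_iter, H.h_iter] at huv
  by_cases h1 : i < h x
  · have : i = j := by omega
    rw [this]
  · rw [H.eq_root _ (show h (p^[i] x) = 0 by rw [H.h_iter]; omega),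
      H.eq_root _ (show h (p^[j] x) = 0 by rw [H.h_iter]; omega)]

theorem cone_p (v : V) : cone p v ⊆ cone p (p v) := by
  rintro x ⟨i, rfl⟩
  exact ⟨i + 1, by rw [Function.iterate_succ_apply']⟩

theorem three_level (H : IsRooted T r p h) (n : ℕ) : ∀ x y z, x ≠ y → x ≠ z → y ≠ z →
    h x = n → h y = n → h z = n → (cone p x).Infinite → (cone p y).Infinite →
    (cone p z).Infinite → ∃ b, Triple T b := by
  -- two siblings and a vertex in the level of their parent
  have two : ∀ x y z, x ≠ y → x ≠ r → y ≠ r → p x = p y → z ≠ p x → h z = h (p x) →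
      (cone p x).Infinite → (cone p y).Infinite → (cone p z).Infinite → ∃ b, Triple T b := by
    intro x y z hxy hx hy hp hz hh ix iy iz
    have hb : p x ≠ r := by
      intro e
      rw [e, H.h_root] at hh
      exact hz (by rw [e]; exact H.eq_root z hh)
    have e1 := H.h_p x hx
    have e2 := H.h_p y hy
    have e3 := H.h_p (p x) hb
    rw [← hp] at e2
    refine ⟨p x, x, y, p (p x), hxy, ?_, ?_, H.adj x hx, by rw [hp]; exact H.adj y hy,
      (H.adj _ hb).symm, ix.mono (H.cone_sub_half x hx), ?_, ?_⟩
    · intro e; rw [← e] at e3; omega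
    · intro e; rw [← e] at e3; omega
    · rw [hp]; exact iy.mono (H.cone_sub_half y hy)
    · refine iz.mono (Set.Subset.trans ?_ (H.compl_cone_sub_half _ hb))
      intro w hw hw'
      exact hz (H.cone_disjoint hh hw hw')
  induction n with
  | zero =>
    intro x y z hxy _ _ hx hy
    exact absurd ((H.eq_root x hx).trans (H.eq_root y hy).symm) hxy
  | succ n ih =>
    intro x y z hxy hxz hyz hx hy hz ix iy iz
    have rx := H.ne_root (v := x) (by omega)
    have ry := H.ne_root (v := y) (by omega)
    have rz := H.ne_root (v := z) (by omega)
    have e1 := H.h_p x rx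
    have e2 := H.h_p y ry
    have e3 := H.h_p z rz
    have jx := ix.mono (cone_p x)
    have jy := iy.mono (cone_p y)
    have jz := iz.mono (cone_p z)
    by_cases h1 : p x = p y
    · by_cases h2 : p x = p z
      · refine ⟨p x, x, y, z, hxy, hxz, hyz, H.adj x rx, ?_, ?_,
          ix.mono (H.cone_sub_half x rx), ?_, ?_⟩
        · rw [h1]; exact H.adj y ry
        · rw [h2]; exact H.adj z rz
        · rw [h1]; exact iy.mono (H.cone_sub_half y ry)
        · rw [h2]; exact iz.mono (H.cone_sub_half z rz)
      · exact two x y (p z) hxy rx ry h1 (fun e => h2 e.symm) (by omega) ix iy jz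
    · by_cases h2 : p x = p z
      · exact two x z (p y) hxz rx rz h2 (fun e => h1 e.symm) (by omega) ix iz jy
      · by_cases h3 : p y = p z
        · exact two y z (p x) hyz ry rz h3 h1 (by omega) iy iz jx
        · exact ih (p x) (p y) (p z) h1 h2 h3 (by omega) (by omega) (by omega) jx jy jz

theorem level_finite (H : IsRooted T r p h) (hlf : ∀ v : V, (T.neighborSet v).Finite) (n : ℕ) :
    {v | h v = n}.Finite := by
  induction n with
  | zero => exact (Set.finite_singleton r).subset fun v hv => H.eq_root v hv
  | succ n ih =>
    refine (ih.biUnion fun v _ => hlf v).subset ?_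
    intro v hv
    have hv' : h v = n + 1 := hv
    have hvr := H.ne_root (v := v) (by omega)
    have := H.h_p v hvr
    simp only [Set.mem_iUnion]
    exact ⟨p v, show h (p v) = n by omega, (H.adj v hvr).symm⟩

end IsRooted

theorem end_inf {V : Type*} (T : SimpleGraph V) (e : T.end) (K : (Finset V)ᵒᵖ) :
    (e.val K).supp.Infinite := by
  refine (SimpleGraph.ComponentCompl.infinite_iff_in_all_ranges (e.val K)).2 ?_
  intro L h
  change Opposite.unop K ⊆ Opposite.unop (Opposite.op L) at h
  exact ⟨e.val (Opposite.op L), e.prop (CategoryTheory.opHomOfLE h)⟩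

theorem exists_triple {V : Type*} {T : SimpleGraph V} {r : V} {p : V → V} {h : V → ℕ}
    (H : IsRooted T r p h) (hlf : ∀ v : V, (T.neighborSet v).Finite)
    (he : Infinite T.end) : ∃ b, Triple T b := by
  classical
  let ι := Infinite.natEmbedding T.end
  have sep : ∀ e e' : T.end, e ≠ e' →
      ∃ K : Finset V, e.val (Opposite.op K) ≠ e'.val (Opposite.op K) := by
    intro e e' hne
    by_contra! hcon
    apply hne
    apply Subtype.ext
    funext K
    exact hcon K.unop
  have mono : ∀ (e e' : T.end) (K L : Finset V), K ⊆ L →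
      e.val (Opposite.op K) ≠ e'.val (Opposite.op K) →
      e.val (Opposite.op L) ≠ e'.val (Opposite.op L) := by
    intro e e' K L hKL hne heq
    apply hne
    have h1 := e.2 (CategoryTheory.opHomOfLE hKL)
    have h2 := e'.2 (CategoryTheory.opHomOfLE hKL)
    rw [← h1, ← h2, heq]
  obtain ⟨K1, hK1⟩ := sep (ι 0) (ι 1) (ι.injective.ne (by decide))
  obtain ⟨K2, hK2⟩ := sep (ι 0) (ι 2) (ι.injective.ne (by decide))
  obtain ⟨K3, hK3⟩ := sep (ι 1) (ι 2) (ι.injective.ne (by decide))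
  let K := K1 ∪ (K2 ∪ K3)
  have m1 := mono _ _ K1 K (by intro x hx; simp [K, hx]) hK1
  have m2 := mono _ _ K2 K (by intro x hx; simp [K, hx]) hK2
  have m3 := mono _ _ K3 K (by intro x hx; simp [K, hx]) hK3
  obtain ⟨n, hn⟩ := (K.finite_toSet.image h).bddAbove
  have hn' : ∀ x, n + 1 ≤ h x → x ∉ (K : Set V) := by
    intro x hx hxK
    have : h x ≤ n := hn ⟨x, hxK, rfl⟩
    omega
  have main : ∀ C : T.ComponentCompl (K : Set V), C.supp.Infinite →
      ∃ x ∈ C.supp, h x = n + 1 ∧ (cone p x).Infinite := by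
    intro C hC
    have climb : ∀ i x, x ∈ C.supp → n + 1 + i ≤ h x → p^[i] x ∈ C.supp := by
      intro i
      induction i with
      | zero => intro x hx _; exact hx
      | succ i ih =>
        intro x hx hh
        rw [Function.iterate_succ_apply]
        have hxr := H.ne_root (v := x) (by omega)
        have e := H.h_p x hxr
        refine ih (p x) ?_ (by omega)
        exact SimpleGraph.ComponentCompl.mem_of_adj (C := C) x (p x) hx (hn' _ (by omega))
          (H.adj x hxr)
    have low_fin : {x | h x < n + 1}.Finite := by
      refine ((Set.finite_Iio (n + 1)).biUnion fun m _ => H.level_finite hlf m).subset ?_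
      intro x hx
      simp only [Set.mem_iUnion]
      exact ⟨h x, hx, rfl⟩
    have hC' := hC.sdiff low_fin
    by_contra! hcon
    apply hC'
    have : (⋃ x ∈ {x | h x = n + 1} ∩ C.supp, cone p x).Finite :=
      ((H.level_finite hlf (n + 1)).subset Set.inter_subset_left).biUnion
        fun x hx => hcon x hx.2 hx.1
    refine this.subset ?_
    rintro x ⟨hx, hx'⟩
    have hx'' : n + 1 ≤ h x := not_lt.1 hx'
    simp only [Set.mem_iUnion]
    refine ⟨p^[h x - (n + 1)] x, ⟨?_, climb _ x hx (by omega)⟩, ⟨_, rfl⟩⟩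
    change h _ = _
    rw [H.h_iter]; omega
  obtain ⟨x, xC, hx, ix⟩ := main _ (end_inf T (ι 0) (Opposite.op K))
  obtain ⟨y, yC, hy, iy⟩ := main _ (end_inf T (ι 1) (Opposite.op K))
  obtain ⟨z, zC, hz, iz⟩ := main _ (end_inf T (ι 2) (Opposite.op K))
  have disj : ∀ (C C' : T.ComponentCompl (K : Set V)) (u u' : V), C ≠ C' → u ∈ C.supp →
      u' ∈ C'.supp → u ≠ u' := by
    rintro C C' u _ hne hu hu' rfl
    exact Set.disjoint_left.1 (SimpleGraph.ComponentCompl.pairwise_disjoint hne) hu hu'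
  exact H.three_level (n + 1) x y z (disj _ _ _ _ m1 xC yC) (disj _ _ _ _ m2 xC zC)
    (disj _ _ _ _ m3 yC zC) hx hy hz ix iy iz

theorem vertex_infinite {V : Type*} {T : SimpleGraph V} (he : Infinite T.end) : Infinite V := by
  let ι := Infinite.natEmbedding T.end
  exact Set.infinite_univ_iff.1 ((end_inf T (ι 0)
    (Opposite.op ∅)).mono (Set.subset_univ _))

theorem good_tree {V : Type*} {T : SimpleGraph V} {r : V} {p : V → V} {h : V → ℕ}
    (hc : T.Connected) (H : IsRooted T r p h) (hlf : ∀ v : V, (T.neighborSet v).Finite)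
    (hq : ∃ s : Set V, s.Finite ∧ ∀ v : V, ∃ u ∈ s, ∃ g : T ≃g T, g u = v)
    (he : Infinite T.end) : ∃ I D k, Good r p h I D k := by
  classical
  have := vertex_infinite he
  obtain ⟨t₀, ht₀⟩ := exists_triple H hlf he
  obtain ⟨R, hR⟩ := uniform_triple hc hq t₀ ht₀
  obtain ⟨N, hN⟩ := uniform_half hc hlf hq
  obtain ⟨D, hD⟩ := uniform_degree hq
  let I : Set V := {v | (cone p v).Infinite}
  have hsub : ∀ v, ch r p I v ⊆ T.neighborSet v := by
    rintro v c ⟨h1, rfl, _⟩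
    exact (H.adj c h1).symm
  have hfin : ∀ v, (ch r p I v).Finite := fun v => (hlf v).subset (hsub v)
  have rI : r ∈ I := by
    have : cone p r = Set.univ := Set.eq_univ_of_forall fun x => ⟨h x, H.iter_h x⟩
    change (cone p r).Infinite
    rw [this]; exact Set.infinite_univ
  have pI : ∀ v ∈ I, p v ∈ I := fun v hv => Set.Infinite.mono (IsRooted.cone_p v) hv
  have iI : ∀ i v, v ∈ I → p^[i] v ∈ I := by
    intro i
    induction i with
    | zero => intro v hv; exact hv
    | succ i ih => intro v hv; rw [Function.iterate_succ_apply]; exact ih _ (pI v hv)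
  have tri : ∀ t, Triple T t → t ∈ I ∧ 2 ≤ (ch r p I t).ncard := by
    have aux : ∀ t a, T.Adj a t → (Half T a t).Infinite → a = p t ∨ a ∈ ch r p I t := by
      intro t a hat hi
      rcases H.nbr a t hat with ⟨h1, rfl⟩ | ⟨_, h2⟩
      · right; exact ⟨h1, rfl, hi.mono (H.half_sub_cone a)⟩
      · left; exact h2.symm
    have two : ∀ t a b, a ≠ b → a ∈ ch r p I t → b ∈ ch r p I t →
        t ∈ I ∧ 2 ≤ (ch r p I t).ncard := by
      intro t a b hab ha hb
      refine ⟨ha.2.1 ▸ pI a ha.2.2, ?_⟩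
      rw [← Set.ncard_pair hab]
      exact Set.ncard_le_ncard (Set.insert_subset ha (Set.singleton_subset_iff.2 hb)) (hfin t)
    rintro t ⟨a, b, c, hab, hac, hbc, ja, jb, jc, ia, ib, ic⟩
    rcases aux t a ja ia with ea | ha
    · rcases aux t b jb ib with eb | hb
      · exact absurd (ea.trans eb.symm) hab
      · rcases aux t c jc ic with ec | hc'
        · exact absurd (ea.trans ec.symm) hac
        · exact two t b c hbc hb hc'
    · rcases aux t b jb ib with eb | hb
      · rcases aux t c jc ic with ec | hc'
        · exact absurd (eb.trans ec.symm) hbc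
        · exact two t a c hac ha hc'
      · exact two t a b hab ha hb
  refine ⟨I, D, N + 1 + (2 * R + 2), rI, pI, hfin, ?_, ?_, ?_, ?_⟩
  · intro v hv
    rw [Nat.one_le_iff_ne_zero, Ne, Set.ncard_eq_zero (hfin v)]
    intro hemp
    apply hv
    have hch : {c | c ≠ r ∧ p c = v}.Finite := (hlf v).subset (by
      rintro c ⟨h1, rfl⟩
      exact (H.adj c h1).symm)
    have hf : (⋃ c ∈ {c | c ≠ r ∧ p c = v}, cone p c).Finite := by
      refine hch.biUnion fun c hcc => ?_
      by_contra hinf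
      have : c ∈ ch r p I v := ⟨hcc.1, hcc.2, hinf⟩
      rw [hemp] at this
      exact this
    refine ((Set.finite_singleton v).union hf).subset ?_
    rintro x ⟨i, hi⟩
    induction i generalizing x with
    | zero => left; exact hi
    | succ i ih =>
      rw [Function.iterate_succ_apply'] at hi
      by_cases hx : p^[i] x = r
      · apply ih
        rw [hx, H.p_root] at hi
        rw [hx, hi]
      · right
        simp only [Set.mem_iUnion]
        exact ⟨p^[i] x, ⟨hx, hi⟩, ⟨i, rfl⟩⟩
  · intro v
    exact (Set.ncard_le_ncard (hsub v) (hlf v)).trans (hD v)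
  · intro v hv hk
    by_contra! hno
    obtain ⟨t, ht, hd⟩ := hR (p^[R + 1] v)
    obtain ⟨tI, t2⟩ := tri t ht
    obtain ⟨w, hw⟩ := hc.exists_walk_length_eq_dist t (p^[R + 1] v)
    rw [T.dist_comm, hw.symm] at hd
    have claim : ∀ (x y : V) (w : T.Walk x y), y = p^[R + 1] v → w.length ≤ R →
        ∃ i j, i ≤ R + 1 + w.length ∧ R + 1 ≤ i + w.length ∧ p^[j] x = p^[i] v ∧
          ∀ j' < j, p^[j'] x ∉ I := by
      intro x y w
      induction w with
      | nil => intro hy _; exact ⟨R + 1, 0, by simp, by simp, hy, by simp⟩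
      | cons hadj q ih =>
        rename_i a b c
        intro hy hl
        rw [SimpleGraph.Walk.length_cons] at hl ⊢
        obtain ⟨i, j, h1, h2, h3, h4⟩ := ih hy (by omega)
        rcases H.nbr a b hadj with ⟨ha, hp⟩ | ⟨hb, hp⟩
        · -- `a` is a child of `b`
          by_cases haI : a ∈ I
          · have hbI : b ∈ I := hp ▸ pI a haI
            have hj : j = 0 := by
              by_contra hj
              exact h4 0 (by omega) hbI
            subst hj
            have h3' : b = p^[i] v := h3
            obtain ⟨i, rfl⟩ : ∃ i', i = i' + 1 := ⟨i - 1, by omega⟩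
            have hn := hno i (by omega)
            have hcv : p^[i] v ≠ r := H.ne_root (by rw [H.h_iter]; omega)
            have m1 : p^[i] v ∈ ch r p I (p^[i + 1] v) :=
              ⟨hcv, by rw [Function.iterate_succ_apply'], iI i v hv⟩
            have m2 : a ∈ ch r p I (p^[i + 1] v) := ⟨ha, by rw [hp, h3'], haI⟩
            have e : a = p^[i] v :=
              (Set.ncard_le_one (hfin _)).1 (by omega) _ m2 _ m1
            exact ⟨i, 0, by omega, by omega, e, by simp⟩
          · refine ⟨i, j + 1, by omega, by omega, ?_, ?_⟩
            · rw [Function.iterate_succ_apply, hp, h3]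
            · intro j' hj'
              cases j' with
              | zero => exact haI
              | succ j' =>
                rw [Function.iterate_succ_apply, hp]
                exact h4 j' (by omega)
        · -- `b` is a child of `a`
          cases j with
          | zero =>
            have h3' : b = p^[i] v := h3
            refine ⟨i + 1, 0, by omega, by omega, ?_, by simp⟩
            rw [Function.iterate_succ_apply', ← h3', hp]; rfl
          | succ j =>
            refine ⟨i, j, by omega, by omega, ?_, ?_⟩
            · rw [← h3, Function.iterate_succ_apply, hp]
            · intro j' hj'
              have := h4 (j' + 1) (by omega)
              rwa [Function.iterate_succ_apply, hp] at this
    obtain ⟨i, j, h1, h2, h3, h4⟩ := claim _ _ w rfl hd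
    have hj : j = 0 := by
      by_contra hj
      exact h4 0 (by omega) tI
    subst hj
    have h3' : t = p^[i] v := h3
    have hn := hno (i - 1) (by omega)
    rw [show i - 1 + 1 = i by omega, ← h3'] at hn
    omega
  · intro v
    have ex : ∃ i, p^[i] v ∈ I := ⟨h v, by rw [H.iter_h]; exact rI⟩
    have hm := Nat.find_spec ex
    have hle : Nat.find ex ≤ h v := Nat.find_min' ex (by rw [H.iter_h]; exact rI)
    refine ⟨Nat.find ex, ?_, hm⟩
    by_contra hlt
    have h1 : p^[Nat.find ex - 1] v ∉ I := Nat.find_min ex (by omega)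
    have h2 : p^[Nat.find ex - 1] v ≠ r := fun e => h1 (e ▸ rI)
    have h3 : (cone p (p^[Nat.find ex - 1] v)).Finite := Set.not_infinite.1 h1
    have h4 := hN _ _ (H.adj _ h2) (h3.subset (H.half_sub_cone _)) v
      (H.cone_sub_half _ h2 ⟨_, rfl⟩)
    have h5 := H.h_lip hc (p^[Nat.find ex - 1] v) v
    rw [H.h_iter] at h5
    omega

theorem good_cubic {V : Type*} {T : SimpleGraph V} {r : V} {p : V → V} {h : V → ℕ}
    (H : IsRooted T r p h) (h3 : ∀ v : V, (T.neighborSet v).ncard = 3) :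
    Good r p h Set.univ 3 1 := by
  have hfin : ∀ v, (T.neighborSet v).Finite := fun v =>
    Set.finite_of_ncard_ne_zero (by rw [h3]; decide)
  have hsub : ∀ v, ch r p Set.univ v ⊆ T.neighborSet v := by
    rintro v c ⟨h1, rfl, _⟩
    exact (H.adj c h1).symm
  have cfin : ∀ v, (ch r p Set.univ v).Finite := fun v => (hfin v).subset (hsub v)
  have two : ∀ v, 2 ≤ (ch r p Set.univ v).ncard := by
    intro v
    have hs : T.neighborSet v ⊆ insert (p v) (ch r p Set.univ v) := by
      intro x hx
      rcases H.nbr v x hx with ⟨_, h2⟩ | ⟨h1, h2⟩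
      · left; exact h2.symm
      · right; exact ⟨h1, h2, trivial⟩
    have h1 := Set.ncard_le_ncard hs ((cfin v).insert _)
    have h2 := Set.ncard_insert_le (p v) (ch r p Set.univ v)
    rw [h3] at h1
    omega
  refine ⟨trivial, fun _ _ => trivial, cfin, ?_, ?_, ?_, ?_⟩
  · intro v _; have := two v; omega
  · intro v; rw [← h3 v]; exact Set.ncard_le_ncard (hsub v) (hfin v)
  · intro v _ _; exact ⟨0, by omega, two _⟩
  · intro v; exact ⟨0, by omega, trivial⟩

theorem combine {V W : Type*} (T : SimpleGraph V) (T' : SimpleGraph W)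
    (f : V → List Bool) (C : ℕ)
    (f1 : ∀ u v, dB (f u) (f v) ≤ C * T.dist u v)
    (f2 : ∀ u v, T.dist u v ≤ C * dB (f u) (f v) + C) (f3 : ∀ w, ∃ v, dB (f v) w ≤ C)
    (g : W → List Bool) (E : ℕ)
    (g1 : ∀ u v, dB (g u) (g v) ≤ E * T'.dist u v)
    (g2 : ∀ u v, T'.dist u v ≤ E * dB (g u) (g v) + E) (g3 : ∀ w, ∃ v, dB (g v) w ≤ E) :
    QuasiIsometric T T' := by
  choose φ hφ using fun v => g3 (f v)
  -- natural number bounds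
  have up : ∀ u v, T'.dist (φ u) (φ v) ≤ E * C * T.dist u v + (E * (2 * E) + E) := by
    intro u v
    have h1 := g2 (φ u) (φ v)
    have h2 := dB_triangle (g (φ u)) (f u) (g (φ v))
    have h3 := dB_triangle (f u) (f v) (g (φ v))
    have h4 := hφ u
    have h5 := hφ v
    rw [dB_comm] at h5
    have h6 := f1 u v
    have h7 : dB (g (φ u)) (g (φ v)) ≤ C * T.dist u v + 2 * E := by omega
    have h8 := Nat.mul_le_mul_left E h7
    rw [mul_add, ← mul_assoc] at h8
    omega
  have lo : ∀ u v, T.dist u v ≤ C * E * T'.dist (φ u) (φ v) + (C * (2 * E) + C) := by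
    intro u v
    have h1 := f2 u v
    have h2 := dB_triangle (f u) (g (φ u)) (f v)
    have h3 := dB_triangle (g (φ u)) (g (φ v)) (f v)
    have h4 := hφ u
    rw [dB_comm] at h4
    have h5 := hφ v
    have h6 := g1 (φ u) (φ v)
    have h7 : dB (f u) (f v) ≤ E * T'.dist (φ u) (φ v) + 2 * E := by omega
    have h8 := Nat.mul_le_mul_left C h7
    rw [mul_add, ← mul_assoc] at h8
    omega
  have de : ∀ w, ∃ x, T'.dist w (φ x) ≤ E * (C + E) + E := by
    intro w
    obtain ⟨x, hx⟩ := f3 (g w)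
    refine ⟨x, (g2 _ _).trans ?_⟩
    have h1 := dB_triangle (g w) (f x) (g (φ x))
    have h2 := hφ x
    rw [dB_comm] at hx h2
    have := Nat.mul_le_mul_left E (show dB (g w) (g (φ x)) ≤ C + E by omega)
    omega
  let A : ℕ := C * E + 1
  let B : ℕ := E * (2 * E) + E + (C * (2 * E) + C) + (E * (C + E) + E)
  refine ⟨A, B, φ, by simp only [A]; push_cast; nlinarith [mul_nonneg (Nat.cast_nonneg (α := ℝ) C) (Nat.cast_nonneg (α := ℝ) E)], by positivity, ?_, ?_⟩
  · intro u v
    constructor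
    · have h1 : T.dist u v ≤ A * T'.dist (φ u) (φ v) + B := by
        refine (lo u v).trans (add_le_add (Nat.mul_le_mul_right _ (by simp [A])) ?_)
        simp only [B]; omega
      have h2 : (T.dist u v : ℝ) ≤ A * T'.dist (φ u) (φ v) + B := by exact_mod_cast h1
      have hA : (1 : ℝ) ≤ A := by
        simp only [A]; push_cast
        nlinarith [mul_nonneg (Nat.cast_nonneg (α := ℝ) C) (Nat.cast_nonneg (α := ℝ) E)]
      have hB : (0 : ℝ) ≤ B := by positivity
      rw [sub_le_iff_le_add, inv_mul_le_iff₀ (by linarith), mul_add]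
      nlinarith
    · have h1 : T'.dist (φ u) (φ v) ≤ A * T.dist u v + B := by
        refine (up u v).trans (add_le_add (Nat.mul_le_mul_right _ ?_) ?_)
        · simp only [A]; rw [mul_comm]; omega
        · simp only [B]; omega
      exact_mod_cast h1
  · intro w
    obtain ⟨x, hx⟩ := de w
    refine ⟨x, ?_⟩
    have : T'.dist w (φ x) ≤ B := hx.trans (by simp only [B]; omega)
    exact_mod_cast this

end QIT

/-- **Lemma.** Every locally finite tree with infinitely many ends and finitely many orbits
of vertices is quasi-isometric to the 3-regular tree. -/
theorem tree_quasiIsometric_cubicTree {V W : Type u} (T : SimpleGraph V) (T3 : SimpleGraph W)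
    (hT : T.IsTree) (hlf : LocallyFiniteGraph T) (he : Infinite T.end)
    (hq : QuasiTransitive T) (h3 : CubicTree T3) :
    QuasiIsometric T T3 := by
  obtain ⟨r⟩ := hT.connected.nonempty
  obtain ⟨r', p', h', H'⟩ : ∃ r' p' h', QIT.IsRooted T3 r' p' h' := by
    obtain ⟨r'⟩ := h3.1.connected.nonempty
    exact ⟨r', QIT.exists_rooted T3 h3.1 r'⟩
  obtain ⟨p, h, H⟩ := QIT.exists_rooted T hT r
  obtain ⟨I, D, k, G⟩ := QIT.good_tree hT.connected H hlf hq he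
  obtain ⟨f, C, f1, f2, f3⟩ := QIT.core hT.connected H G
  obtain ⟨g, E, g1, g2, g3⟩ := QIT.core h3.1.connected H' (QIT.good_cubic H' h3.2)
  exact QIT.combine T T3 f C f1 f2 f3 g E g1 g2 g3
end
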